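/- arXiv:2405.07296 — 2 statements merged into one kernel-verified Lean document; each statement's English description precedes it below -/
import Mathlib

section
/- Let m ∈ ℕ with m ≥ 1, let h : ℕ^m → ℕ be a polynomial in m variables with coefficients in ℕ and no constant term, and let A ⊆ ℕ. Then the following are equivalent: (1) there exist functions α₁,…,α_m : 𝒫_f(ℕ^ℕ) → ℕ and H₁,…,H_m : 𝒫_f(ℕ^ℕ) → 𝒫_f(ℕ) such that (a) whenever F ⊊ G in 𝒫_f(ℕ^ℕ), max H_j(F) < min H_j(G) for every j ∈ {1,…,m}, and (b) whenever G₁ ⊊ G₂ ⊊ ⋯ ⊊ G_n ⊊ ⋯ is an infinite strictly increasing chain in 𝒫_f(ℕ^ℕ), f_i ∈ G_i for each i ∈ ℕ, and β₁ < ⋯ < β_m are in 𝒫_f(ℕ), then h(Σ_{i∈β₁}(α₁(G_i)+Σ_{t∈H₁(G_i)}f_i(t)), …, Σ_{i∈β_m}(α_m(G_i)+Σ_{t∈H_m(G_i)}f_i(t))) ∈ A; (2) there exist idempotent ultrafilters p₁,…,p_m ∈ 𝒥 such that A ∈ h̃(⊗_{i=1}^m p_i), where h̃ denotes the pushforward of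 ultrafilters along h. -/
namespace MultiCST

/-- The sum `p + q` of ultrafilters on ℕ: `A ∈ p + q` iff `{x : {y : x+y ∈ A} ∈ q} ∈ p`. -/
def uAdd (p q : Ultrafilter ℕ) : Ultrafilter ℕ :=
  p.bind fun x => q.map fun y => x + y

/-- `A ⊆ ℕ` is a J-set. -/
def IsJSet (A : Set ℕ) : Prop :=
  ∀ F : Finset (ℕ → ℕ), F.Nonempty →
    ∃ (a : ℕ) (β : Finset ℕ), β.Nonempty ∧ ∀ f ∈ F, a + ∑ t ∈ β, f t ∈ A

/-- `p ∈ 𝒥`: every member of `p` is a J-set. -/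
def MemJ (p : Ultrafilter ℕ) : Prop := ∀ A : Set ℕ, A ∈ p → IsJSet A

/-- `p` is an idempotent ultrafilter. -/
def IdempotentUF (p : Ultrafilter ℕ) : Prop := uAdd p p = p

/-- `p` is a minimal idempotent ultrafilter. -/
def IsMinimalIdempotent (p : Ultrafilter ℕ) : Prop :=
  IdempotentUF p ∧
    ∀ q : Ultrafilter ℕ, IdempotentUF q → uAdd q p = q → uAdd p q = q → q = p

/-- Tensor product `⊗_{i=1}^m p_i` of ultrafilters on ℕ, as an ultrafilter on `Fin m → ℕ`. -/
def tensor : ∀ m : ℕ, (Fin m → Ultrafilter ℕ) → Ultrafilter (Fin m → ℕ)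
  | 0, _ => pure fun i => i.elim0
  | m + 1, p =>
      (p 0).bind fun x => (tensor m fun i => p i.succ).map fun v => Fin.cons x v

/-- `f : ℕ → ℕ` is (given by) a polynomial with coefficients in ℕ and zero constant term. -/
def IsPolyZeroConst (f : ℕ → ℕ) : Prop :=
  ∃ P : Polynomial ℕ, P.coeff 0 = 0 ∧ ∀ x, f x = P.eval x

/-- The linear combination `a₁·p₁ + a₂·p₂ + ⋯ + a_m·p_m` of ultrafilters on ℕ. -/
def linComb : ∀ m : ℕ, (Fin m → ℕ) → (Fin m → Ultrafilter ℕ) → Ultrafilter ℕ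
  | 0, _, _ => pure 0
  | m + 1, a, p =>
      uAdd ((p 0).map fun x => a 0 * x)
        (linComb m (fun i => a i.succ) fun i => p i.succ)

/-!
Only the set `B = h ⁻¹' A` matters: `A ∈ h̃(⊗ pᵢ)` says `B ∈ ⊗ pᵢ`.

Given `α` and `H`, fix a coordinate and call a sum of values `α(Gᵢ) + ∑_{t ∈ H(Gᵢ)} fᵢ(t)` along a
finite chain above `K` a chain sum above `K`. Sets of chain sums are J-sets, they decrease with
`K`, and adding to a chain sum above `K` one that lives above the end of its chain gives a chain
sum above `K`. As J-sets are partition regular (Hales–Jewett), the ultrafilters in `𝒥` that contain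
all these sets form a nonempty compact subsemigroup of `βℕ`, and an idempotent of it exists by
Ellis' theorem. Unfolding the tensor product of these idempotents, coordinate after coordinate,
puts each block of a chain above all the previous ones.

Conversely, given idempotents in `𝒥`, one chooses `α(F)` and `H(F)` by recursion on `F`: the
finitely many sums formed so far are bounded, so the requirement that they all extend inside the
prescribed set holds on a member of the idempotent, which is a J-set.
-/

open Filter Finset

section JSets

/-- The function attached to a word `w` over an alphabet `S` of functions `φ s : ℕ → ℕ`: its value
at `t` reads the letter `w i` at the point `e (t, i)`. A combinatorial line of words then
gives, up to a constant, the alphabet itself. -/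
def wordFun {S ι : Type*} [Fintype ι] (φ : S → ℕ → ℕ) (e : ℕ × ι ↪ ℕ) (w : ι → S) (t : ℕ) : ℕ :=
  ∑ i, φ (w i) (e (t, i))

theorem exists_sum_wordFun_line_eq {S ι : Type*} [Fintype ι] (φ : S → ℕ → ℕ) (e : ℕ × ι ↪ ℕ)
    (ℓ : Combinatorics.Line S ι) (a : ℕ) {β : Finset ℕ} (hβ : β.Nonempty) :
    ∃ (a' : ℕ) (β' : Finset ℕ), β'.Nonempty ∧
      ∀ s, a + ∑ t ∈ β, wordFun φ e (ℓ s) t = a' + ∑ t ∈ β', φ s t := by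
  let fixed (t : ℕ) (i : ι) : ℕ := (ℓ.idxFun i).elim 0 fun s => φ s (e (t, i))
  let active : Finset ι := {i | ℓ.idxFun i = none}
  have letter_eq (s : S) (t : ℕ) (i : ι) :
      φ (ℓ s i) (e (t, i)) = fixed t i + if ℓ.idxFun i = none then φ s (e (t, i)) else 0 := by
    cases hi : ℓ.idxFun i <;> simp [fixed, hi]
  refine ⟨a + ∑ t ∈ β, ∑ i, fixed t i, (β ×ˢ active).map e, ?_, fun s => ?_⟩
  · obtain ⟨i, hi⟩ := ℓ.proper
    exact (hβ.product ⟨i, by simpa [active] using hi⟩).map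
  · simp only [wordFun, letter_eq, sum_add_distrib, ← sum_filter, sum_map, sum_product, active,
      add_assoc]

theorem IsJSet.exists_monochromatic {A : Set ℕ} (hA : IsJSet A) {F : Finset (ℕ → ℕ)}
    (hF : F.Nonempty) {κ : Type*} [Finite κ] (c : ℕ → κ) :
    ∃ (a : ℕ) (β : Finset ℕ) (k : κ), β.Nonempty ∧
      ∀ f ∈ F, a + ∑ t ∈ β, f t ∈ A ∧ c (a + ∑ t ∈ β, f t) = k := by
  classical
  obtain ⟨ι, _, exists_line⟩ := Combinatorics.Line.exists_mono_in_high_dimension F κ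
  obtain ⟨e⟩ : Nonempty (ℕ × ι ↪ ℕ) := nonempty_embedding_nat _
  have : Nonempty F := hF.to_subtype
  let φ : F → ℕ → ℕ := Subtype.val
  obtain ⟨a, β, hβ, haβ⟩ := hA (univ.image (wordFun φ e)) (univ_nonempty.image _)
  obtain ⟨ℓ, k, hk⟩ := exists_line fun w => c (a + ∑ t ∈ β, wordFun φ e w t)
  obtain ⟨a', β', hβ', line_eq⟩ := exists_sum_wordFun_line_eq φ e ℓ a hβ
  refine ⟨a', β', k, hβ', fun f hf => ?_⟩
  change a' + ∑ t ∈ β', φ ⟨f, hf⟩ t ∈ A ∧ c (a' + ∑ t ∈ β', φ ⟨f, hf⟩ t) = k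
  rw [← line_eq]
  exact ⟨haβ _ (mem_image_of_mem _ (mem_univ _)), hk ⟨f, hf⟩⟩

theorem IsJSet.mono {A B : Set ℕ} (hA : IsJSet A) (hAB : A ⊆ B) : IsJSet B := fun F hF =>
  let ⟨a, β, hβ, h⟩ := hA F hF
  ⟨a, β, hβ, fun f hf => hAB (h f hf)⟩

theorem not_isJSet_empty : ¬ IsJSet ∅ := fun h =>
  let ⟨_, _, _, h⟩ := h {0} (singleton_nonempty _)
  h 0 (mem_singleton_self _)

theorem IsJSet.of_union {A B : Set ℕ} (hAB : IsJSet (A ∪ B)) : IsJSet A ∨ IsJSet B := by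
  classical
  by_contra! ⟨hA, hB⟩
  simp only [IsJSet, not_forall, not_exists, not_and] at hA hB
  obtain ⟨F, hF, avoids_A⟩ := hA
  obtain ⟨F', _, avoids_B⟩ := hB
  obtain ⟨a, β, k, hβ, hk⟩ :=
    hAB.exists_monochromatic (hF.mono (subset_union_left (s₂ := F'))) (· ∈ A)
  by_cases hkA : k
  · obtain ⟨f, hf, hfA⟩ := avoids_A a β hβ
    exact hfA ((hk f (mem_union_left _ hf)).2 ▸ hkA)
  · obtain ⟨f, hf, hfB⟩ := avoids_B a β hβ
    obtain ⟨hfAB, hfk⟩ := hk f (mem_union_right _ hf)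
    exact hfAB.elim (fun hfA => hkA (hfk ▸ hfA)) hfB

theorem IsJSet.exists_forall_ge {A : Set ℕ} (hA : IsJSet A) (N : ℕ) (F : Finset (ℕ → ℕ)) :
    ∃ (a : ℕ) (β : Finset ℕ), β.Nonempty ∧ (∀ t ∈ β, N ≤ t) ∧ ∀ f ∈ F, a + ∑ t ∈ β, f t ∈ A := by
  classical
  obtain ⟨a, β, hβ, haβ⟩ := hA (insert 0 (F.image fun f t => f (t + N))) (insert_nonempty _ _)
  refine ⟨a, β.map (addRightEmbedding N), hβ.map, by simp, fun f hf => ?_⟩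
  simpa using haβ _ (mem_insert_of_mem (mem_image_of_mem _ hf))

/-- The filter of sets with non-J complement; `𝒥` is the set of ultrafilters finer than it. -/
def coNonJSetFilter : Filter ℕ :=
  comk (¬ IsJSet ·) not_isJSet_empty (fun _ hA _ hBA hB => hA (hB.mono hBA))
    fun _ hA _ hB hAB => hAB.of_union.elim hA hB

theorem memJ_of_le_coNonJSetFilter {p : Ultrafilter ℕ} (hp : ↑p ≤ coNonJSetFilter) : MemJ p :=
  fun A hA => by
    by_contra hJ
    exact p.compl_mem_iff_notMem.1 (hp (compl_mem_comk.2 hJ)) hA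

theorem MemJ.le_coNonJSetFilter {p : Ultrafilter ℕ} (hp : MemJ p) : ↑p ≤ coNonJSetFilter :=
  fun A hA => by
    by_contra hAp
    exact hA (hp _ (p.compl_mem_iff_notMem.2 hAp))

theorem neBot_coNonJSetFilter_inf {𝓕 : Filter ℕ} (h𝓕 : ∀ A ∈ 𝓕, IsJSet A) :
    (coNonJSetFilter ⊓ 𝓕).NeBot := by
  refine inf_neBot_iff.2 fun U hU A hA => ?_
  by_contra hUA
  refine hU ((h𝓕 A hA).mono fun x hxA hxU => hUA ⟨x, hxU, hxA⟩)

end JSets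

section Ultrafilters

variable {p q : Ultrafilter ℕ}

theorem eventually_uAdd {P : ℕ → Prop} :
    (∀ᶠ z in uAdd p q, P z) ↔ ∀ᶠ x in p, ∀ᶠ y in q, P (x + y) := Iff.rfl

theorem eventually_tensor_succ {m : ℕ} {p : Fin (m + 1) → Ultrafilter ℕ}
    {P : (Fin (m + 1) → ℕ) → Prop} :
    (∀ᶠ v in tensor (m + 1) p, P v) ↔
      ∀ᶠ x in p 0, ∀ᶠ v in tensor m fun i => p i.succ, P (Fin.cons x v) := Iff.rfl

theorem MemJ.uAdd_right (hq : MemJ q) : MemJ (uAdd p q) := fun A hA F hF => by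
  obtain ⟨x, hx⟩ := (eventually_uAdd.1 hA).exists
  obtain ⟨a, β, hβ, haβ⟩ := hq _ hx F hF
  exact ⟨x + a, β, hβ, fun f hf => by rw [add_assoc]; exact haβ f hf⟩

theorem uAdd_le {𝓕 : Filter ℕ} (h𝓕 : ∀ A ∈ 𝓕, ∀ᶠ x in 𝓕, ∀ᶠ y in 𝓕, x + y ∈ A)
    (hp : ↑p ≤ 𝓕) (hq : ↑q ≤ 𝓕) : ↑(uAdd p q) ≤ 𝓕 := fun A hA =>
  ((h𝓕 A hA).filter_mono hp).mono fun _ hx => hx.filter_mono hq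

theorem isClosed_setOf_ultrafilter_le {X : Type*} (𝓕 : Filter X) :
    IsClosed {p : Ultrafilter X | ↑p ≤ 𝓕} := by
  simp only [Filter.le_def, Set.ofPred_forall]
  exact isClosed_biInter fun A _ => ultrafilter_isClosed_basic A

theorem exists_idempotentUF_le {𝓕 : Filter ℕ} [𝓕.NeBot]
    (h𝓕 : ∀ p q : Ultrafilter ℕ, ↑p ≤ 𝓕 → ↑q ≤ 𝓕 → ↑(uAdd p q) ≤ 𝓕) :
    ∃ p : Ultrafilter ℕ, IdempotentUF p ∧ ↑p ≤ 𝓕 := by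
  let _ : AddSemigroup (Ultrafilter ℕ) := Ultrafilter.addSemigroup
  have add_eq_uAdd (p q : Ultrafilter ℕ) : p + q = uAdd p q := Ultrafilter.ext fun _ => Iff.rfl
  obtain ⟨p, hp, hpp⟩ := exists_idempotent_in_compact_add_subsemigroup
    Ultrafilter.continuous_add_left {p : Ultrafilter ℕ | ↑p ≤ 𝓕} (Ultrafilter.exists_le 𝓕)
    (isClosed_setOf_ultrafilter_le 𝓕).isCompact fun p hp q hq => add_eq_uAdd p q ▸ h𝓕 p q hp hq
  exact ⟨p, (add_eq_uAdd p p).symm.trans hpp, hp⟩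

theorem exists_idempotentUF_memJ_le {𝓕 : Filter ℕ} (hJ : ∀ A ∈ 𝓕, IsJSet A)
    (h𝓕 : ∀ A ∈ 𝓕, ∀ᶠ x in 𝓕, ∀ᶠ y in 𝓕, x + y ∈ A) :
    ∃ p : Ultrafilter ℕ, IdempotentUF p ∧ MemJ p ∧ ↑p ≤ 𝓕 := by
  have := neBot_coNonJSetFilter_inf hJ
  obtain ⟨p, hp, hpJ𝓕⟩ := exists_idempotentUF_le (𝓕 := coNonJSetFilter ⊓ 𝓕) fun p q hp hq =>
    le_inf (memJ_of_le_coNonJSetFilter (hq.trans inf_le_left)).uAdd_right.le_coNonJSetFilter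
      (uAdd_le h𝓕 (hp.trans inf_le_right) (hq.trans inf_le_right))
  exact ⟨p, hp, memJ_of_le_coNonJSetFilter (hpJ𝓕.trans inf_le_left), hpJ𝓕.trans inf_le_right⟩

/-- The set `C⋆ = {x ∈ C : -x + C ∈ p}`, which serves to build sums inside `C` one term at a time
when `p` is idempotent. -/
def star (p : Ultrafilter ℕ) (C : Set ℕ) : Set ℕ := {x ∈ C | ∀ᶠ y in p, x + y ∈ C}

theorem IdempotentUF.star_mem (hp : IdempotentUF p) {C : Set ℕ} (hC : C ∈ p) : star p C ∈ p :=
  inter_mem hC (eventually_uAdd.1 (show C ∈ uAdd p p by rwa [hp]))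

theorem IdempotentUF.eventually_add_mem_star (hp : IdempotentUF p) {C : Set ℕ} (hC : C ∈ p)
    {x : ℕ} (hx : x = 0 ∨ x ∈ star p C) : ∀ᶠ y in p, x + y ∈ star p C := by
  rcases hx with rfl | ⟨-, hx⟩
  · filter_upwards [hp.star_mem hC] with y hy
    rwa [zero_add]
  · filter_upwards [hp.star_mem hx] with y hy
    exact ⟨hy.1, hy.2.mono fun z hz => by rw [add_assoc]; exact hz⟩

end Ultrafilters

section BlockSequences

/-- Nonempty finite sets of indices with `β₁ < ⋯ < β_m`. -/
structure IsBlockSequence {m : ℕ} (β : Fin m → Finset ℕ) : Prop where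
  nonempty : ∀ l, (β l).Nonempty
  lt : ∀ l l', l < l' → ∀ x ∈ β l, ∀ y ∈ β l', x < y

namespace IsBlockSequence

variable {m : ℕ}

theorem tail {β : Fin (m + 1) → Finset ℕ} (hβ : IsBlockSequence β) :
    IsBlockSequence fun l : Fin m => β l.succ :=
  ⟨fun l => hβ.nonempty l.succ, fun _ _ hl => hβ.lt _ _ (Fin.succ_lt_succ_iff.2 hl)⟩

theorem cons {s : Finset ℕ} {β : Fin m → Finset ℕ} (hs : s.Nonempty) (hβ : IsBlockSequence β)
    (hsβ : ∀ l, ∀ x ∈ s, ∀ y ∈ β l, x < y) :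
    IsBlockSequence (Fin.cons s β : Fin (m + 1) → Finset ℕ) where
  nonempty := Fin.forall_fin_succ.2 ⟨hs, hβ.nonempty⟩
  lt l l' hl := by
    cases l' using Fin.cases with
    | zero => exact absurd hl (Fin.not_lt_zero l)
    | succ l' =>
      cases l using Fin.cases with
      | zero => exact hsβ l'
      | succ l => exact hβ.lt l l' (Fin.succ_lt_succ_iff.1 hl)

theorem map_addRight {β : Fin m → Finset ℕ} (hβ : IsBlockSequence β) (n : ℕ) :
    IsBlockSequence fun l => (β l).map (addRightEmbedding n) where
  nonempty l := (hβ.nonempty l).map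
  lt l l' hl := by simpa using hβ.lt l l' hl

end IsBlockSequence

end BlockSequences

section Splice

/-- The first `n` terms of `u`, followed by the sequence `v`. -/
def splice {Y : Type*} (n : ℕ) (u v : ℕ → Y) (i : ℕ) : Y := if i < n then u i else v (i - n)

theorem splice_of_lt {Y : Type*} {n : ℕ} (u v : ℕ → Y) {i : ℕ} (hi : i < n) :
    splice n u v i = u i := if_pos hi

theorem splice_add {Y : Type*} (n : ℕ) (u v : ℕ → Y) (i : ℕ) : splice n u v (i + n) = v i := by
  simp [splice]

variable {Y : Type*} [Preorder Y] {n : ℕ} {u v : ℕ → Y}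

theorem strictMono_splice (hu : StrictMono u) (hv : StrictMono v) (huv : u n ≤ v 0) :
    StrictMono (splice n u v) := by
  intro i j hij
  unfold splice
  split_ifs with hi hj hj
  · exact hu hij
  · exact ((hu hi).trans_le huv).trans_le (hv.monotone (Nat.zero_le _))
  · omega
  · exact hv (by omega)

theorem zero_le_splice_zero (hu : Monotone u) (huv : u n ≤ v 0) : u 0 ≤ splice n u v 0 := by
  unfold splice
  split_ifs
  · exact le_rfl
  · exact (hu (Nat.zero_le n)).trans (by simpa using huv)

end Splice

section PointedChains

variable {X : Type*}

/-- A strictly increasing sequence `G₁ ⊊ G₂ ⊊ ⋯` of finite sets with a point `fᵢ ∈ Gᵢ` for each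
`i`, as in clause (b) of the theorem. -/
structure IsPointedChain (G : ℕ → Finset X) (f : ℕ → X) : Prop where
  strictMono : StrictMono G
  mem : ∀ i, f i ∈ G i

/-- The sum of the values `g (Gᵢ) (fᵢ)` over the indices `i ∈ s`. -/
def chainSum (g : Finset X → X → ℕ) (G : ℕ → Finset X) (f : ℕ → X) (s : Finset ℕ) : ℕ :=
  ∑ i ∈ s, g (G i) (f i)

variable {g : Finset X → X → ℕ} {G G' : ℕ → Finset X} {f f' : ℕ → X}

theorem exists_isPointedChain [Infinite X] {K : Finset X} {x : X} (hx : x ∈ K) :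
    ∃ G, IsPointedChain G (fun _ => x) ∧ G 0 = K := by
  classical
  have : NoMaxOrder (Finset X) := ⟨fun F =>
    let ⟨y, hy⟩ := Infinite.exists_notMem_finset F
    ⟨insert y F, ssubset_insert hy⟩⟩
  obtain ⟨G, hG, rfl⟩ := Nat.exists_strictMono' K
  exact ⟨G, ⟨hG, fun i => hG.monotone (Nat.zero_le i) hx⟩, rfl⟩

theorem IsPointedChain.splice {n : ℕ} (h : IsPointedChain G f) (h' : IsPointedChain G' f')
    (hn : G n ⊆ G' 0) : IsPointedChain (splice n G G') (splice n f f') where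
  strictMono := strictMono_splice h.strictMono h'.strictMono hn
  mem i := by
    unfold MultiCST.splice
    split_ifs
    · exact h.mem i
    · exact h'.mem _

theorem chainSum_splice_range (g : Finset X → X → ℕ) (n : ℕ) (G G' : ℕ → Finset X)
    (f f' : ℕ → X) :
    chainSum g (splice n G G') (splice n f f') (range n) = chainSum g G f (range n) :=
  sum_congr rfl fun i hi => by
    rw [splice_of_lt _ _ (mem_range.1 hi), splice_of_lt _ _ (mem_range.1 hi)]

theorem chainSum_splice_map (g : Finset X → X → ℕ) (n : ℕ) (G G' : ℕ → Finset X) (f f' : ℕ → X)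
    (s : Finset ℕ) :
    chainSum g (splice n G G') (splice n f f') (s.map (addRightEmbedding n)) =
      chainSum g G' f' s := by
  simp only [chainSum, sum_map, addRightEmbedding_apply, splice_add]

/-- The sums of `g` along nonempty finite chains above `K`. Initial segments of infinite chains
suffice, since a finite part of a chain is an initial segment of another one. -/
def chainSums (g : Finset X → X → ℕ) (K : Finset X) : Set ℕ :=
  {x | ∃ G f n, IsPointedChain G f ∧ K ⊆ G 0 ∧ 0 < n ∧ chainSum g G f (range n) = x}

theorem chainSums_antitone (g : Finset X → X → ℕ) : Antitone (chainSums g) := by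
  rintro K K' hK _ ⟨G, f, n, h, hG, hn, rfl⟩
  exact ⟨G, f, n, h, hK.trans hG, hn, rfl⟩

theorem IsPointedChain.chainSum_range_add_mem (h : IsPointedChain G f) {n : ℕ} {y : ℕ}
    (hy : y ∈ chainSums g (G n)) : chainSum g G f (range n) + y ∈ chainSums g (G 0) := by
  obtain ⟨G', f', n', h', hG', hn', rfl⟩ := hy
  refine ⟨MultiCST.splice n G G', MultiCST.splice n f f', n + n', h.splice h' hG',
    zero_le_splice_zero h.strictMono.monotone hG', by omega, ?_⟩
  rw [← chainSum_splice_range g n G G' f f', ← chainSum_splice_map g n G G' f f' (range n')]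
  rw [chainSum, sum_range_add]
  simp only [chainSum, sum_map, addRightEmbedding_apply, add_comm n]

/-- The filter generated by the sets of chain sums above finite sets. -/
def chainFilter (g : Finset X → X → ℕ) : Filter ℕ := ⨅ K, 𝓟 (chainSums g K)

theorem hasBasis_chainFilter (g : Finset X → X → ℕ) :
    (chainFilter g).HasBasis (fun _ => True) (chainSums g) :=
  hasBasis_iInf_principal (chainSums_antitone g).directed_ge

theorem eventually_eventually_add_mem_of_mem_chainFilter {A : Set ℕ} (hA : A ∈ chainFilter g) :
    ∀ᶠ x in chainFilter g, ∀ᶠ y in chainFilter g, x + y ∈ A := by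
  obtain ⟨K, -, hKA⟩ := (hasBasis_chainFilter g).mem_iff.1 hA
  refine (hasBasis_chainFilter g).eventually_iff.2 ⟨K, trivial, ?_⟩
  rintro _ ⟨G, f, n, h, hG, -, rfl⟩
  exact (hasBasis_chainFilter g).eventually_iff.2
    ⟨G n, trivial, fun y hy => hKA (chainSums_antitone g hG (h.chainSum_range_add_mem hy))⟩

theorem mem_tensor_of_forall_isPointedChain [Infinite X] {m : ℕ} {p : Fin m → Ultrafilter ℕ}
    {g : Fin m → Finset X → X → ℕ} (hp : ∀ l, ↑(p l) ≤ chainFilter (g l)) (K : Finset X)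
    {B : Set (Fin m → ℕ)}
    (hB : ∀ G f, IsPointedChain G f → K ⊆ G 0 → ∀ β, IsBlockSequence β →
      (fun l => chainSum (g l) G f (β l)) ∈ B) :
    B ∈ tensor m p := by
  classical
  induction m generalizing K with
  | zero =>
    obtain ⟨x⟩ : Nonempty X := inferInstance
    obtain ⟨G, h, hG⟩ := exists_isPointedChain (mem_insert_self x K)
    have hmem := hB G _ h (hG ▸ subset_insert x K) Fin.elim0 ⟨Fin.rec0, Fin.rec0⟩
    rwa [Subsingleton.elim (fun l => chainSum _ _ _ _) Fin.elim0] at hmem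
  | succ m ih =>
    refine eventually_tensor_succ.2 ?_
    filter_upwards [hp 0 ((hasBasis_chainFilter (g 0)).mem_of_mem (i := K) trivial)]
    rintro _ ⟨G, f, n, h, hG, hn, rfl⟩
    refine ih (fun l => hp l.succ) (G n) fun G' f' h' hG' β hβ => ?_
    have hmem := hB _ _ (h.splice h' hG')
      (hG.trans (zero_le_splice_zero h.strictMono.monotone hG'))
      _ ((hβ.map_addRight n).cons (nonempty_range_iff.2 hn.ne') fun l x hx y hy => by
        obtain ⟨z, -, rfl⟩ := mem_map.1 hy
        exact (mem_range.1 hx).trans_le (Nat.le_add_left n z))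
    rw [← Fin.cons_self_tail (fun l => chainSum _ _ _ _)] at hmem
    simp only [Fin.tail_def, Fin.cons_zero, Fin.cons_succ, chainSum_splice_range,
      chainSum_splice_map] at hmem
    exact hmem

end PointedChains

section ShiftedSums

/-- The value `α(F) + ∑_{t ∈ H(F)} f(t)` of clause (b). -/
def shiftedSum (α : Finset (ℕ → ℕ) → ℕ) (H : Finset (ℕ → ℕ) → Finset ℕ) (F : Finset (ℕ → ℕ))
    (f : ℕ → ℕ) : ℕ :=
  α F + ∑ t ∈ H F, f t

theorem isJSet_of_mem_chainFilter_shiftedSum {α : Finset (ℕ → ℕ) → ℕ}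
    {H : Finset (ℕ → ℕ) → Finset ℕ} (hH : ∀ F, F.Nonempty → (H F).Nonempty) {A : Set ℕ}
    (hA : A ∈ chainFilter (shiftedSum α H)) : IsJSet A := by
  classical
  obtain ⟨K, -, hKA⟩ := (hasBasis_chainFilter _).mem_iff.1 hA
  refine fun F hF => ⟨α (K ∪ F), H (K ∪ F), hH _ hF.inr, fun f hf => hKA ?_⟩
  obtain ⟨G, h, hG⟩ := exists_isPointedChain (mem_union_right K hf)
  exact ⟨G, fun _ => f, 1, h, hG ▸ subset_union_left, one_pos, by simp [chainSum, shiftedSum, hG]⟩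

theorem exists_idempotentUF_memJ_le_chainFilter {α : Finset (ℕ → ℕ) → ℕ}
    {H : Finset (ℕ → ℕ) → Finset ℕ} (hH : ∀ F, F.Nonempty → (H F).Nonempty) :
    ∃ p : Ultrafilter ℕ, IdempotentUF p ∧ MemJ p ∧ ↑p ≤ chainFilter (shiftedSum α H) :=
  exists_idempotentUF_memJ_le (fun _ => isJSet_of_mem_chainFilter_shiftedSum hH)
    fun _ => eventually_eventually_add_mem_of_mem_chainFilter

end ShiftedSums

section RecursiveChoice

variable {X : Type*} [DecidableEq X]

theorem exists_forall_sum_ssubsets {D : Type*} (b : Finset X → D → ℕ) {Q : Finset X → ℕ → D → Prop}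
    (hQ : ∀ F n, ∃ d, Q F n d) :
    ∃ c : Finset X → D, ∀ F, Q F (∑ K ∈ F.ssubsets, b F (c K)) (c F) := by
  choose d hd using hQ
  let c : Finset X → D := Finset.isWellFounded_ssubset.wf.fix fun F c =>
    d F (∑ K ∈ F.ssubsets.attach, b F (c K (mem_ssubsets.1 K.2)))
  refine ⟨c, fun F => ?_⟩
  have hc : c F = d F (∑ K ∈ F.ssubsets, b F (c K)) := by
    rw [← sum_attach]
    exact Finset.isWellFounded_ssubset.wf.fix_eq _ F
  exact hc ▸ hd F _

/-- A bound, depending only on `F`, for all sums of `g` along chains of proper subsets of `F`. -/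
def chainBound (g : Finset X → X → ℕ) (F : Finset X) : ℕ := ∑ K ∈ F.ssubsets, ∑ x ∈ F, g K x

theorem IsPointedChain.chainSum_le_chainBound {G : ℕ → Finset X} {f : ℕ → X}
    (h : IsPointedChain G f) (g : Finset X → X → ℕ) {s : Finset ℕ} {F : Finset X}
    (hs : ∀ i ∈ s, G i ⊂ F) : chainSum g G f s ≤ chainBound g F :=
  calc ∑ i ∈ s, g (G i) (f i)
    _ ≤ ∑ i ∈ s, ∑ x ∈ F, g (G i) x := sum_le_sum fun i hi =>
        single_le_sum (f := g (G i)) (fun _ _ => Nat.zero_le _) ((hs i hi).1 (h.mem i))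
    _ = ∑ K ∈ s.image G, ∑ x ∈ F, g K x :=
        (sum_image (f := fun K => ∑ x ∈ F, g K x) h.strictMono.injective.injOn).symm
    _ ≤ ∑ K ∈ F.ssubsets, ∑ x ∈ F, g K x :=
        sum_le_sum_of_subset (image_subset_iff.2 fun i hi => mem_ssubsets.2 (hs i hi))

end RecursiveChoice

section Selection

/-- Clause (a) of the theorem, for one coordinate. -/
structure IsIncreasing {X : Type*} (H : Finset X → Finset ℕ) : Prop where
  nonempty : ∀ F, (H F).Nonempty
  lt : ∀ F G, F ⊂ G → ∀ x ∈ H F, ∀ y ∈ H G, x < y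

variable {p : Ultrafilter ℕ}

theorem exists_shiftedSum_add_mem_star (hp : IdempotentUF p) (hJ : MemJ p)
    {C : Finset (ℕ → ℕ) → Set ℕ} (hC : ∀ F, C F ∈ p) (F : Finset (ℕ → ℕ)) (n : ℕ) :
    ∃ (a : ℕ) (β : Finset ℕ), β.Nonempty ∧ (∀ t ∈ β, n ≤ t) ∧
      ∀ f ∈ F, ∀ K ⊆ F, ∀ x ≤ n, (x = 0 ∨ x ∈ star p (C K)) →
        x + (a + ∑ t ∈ β, f t) ∈ star p (C K) := by
  have hmem : ∀ᶠ y in p, ∀ K ∈ F.powerset, ∀ x ∈ Iic n,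
      (x = 0 ∨ x ∈ star p (C K)) → x + y ∈ star p (C K) := by
    simp only [eventually_all_finset, eventually_imp_distrib_left]
    exact fun K _ x _ => hp.eventually_add_mem_star (hC K)
  obtain ⟨a, β, hβ, hnβ, h⟩ := (hJ _ hmem).exists_forall_ge n F
  exact ⟨a, β, hβ, hnβ, fun f hf K hK x hx => h f hf K (mem_powerset.2 hK) x (mem_Iic.2 hx)⟩

theorem exists_isIncreasing_shiftedSum_add_mem_star [DecidableEq (ℕ → ℕ)] (hp : IdempotentUF p)
    (hJ : MemJ p) {C : Finset (ℕ → ℕ) → Set ℕ} (hC : ∀ F, C F ∈ p) :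
    ∃ (α : Finset (ℕ → ℕ) → ℕ) (H : Finset (ℕ → ℕ) → Finset ℕ), IsIncreasing H ∧
      ∀ F, ∀ f ∈ F, ∀ K ⊆ F, ∀ x ≤ chainBound (shiftedSum α H) F, (x = 0 ∨ x ∈ star p (C K)) →
        x + shiftedSum α H F f ∈ star p (C K) := by
  -- The size of `(a, β)` bounds its contributions to chain sums and exceeds all elements of `β`.
  let size (F : Finset (ℕ → ℕ)) (d : ℕ × Finset ℕ) : ℕ :=
    ∑ f ∈ F, (d.1 + ∑ t ∈ d.2, f t) + (d.2.sup id + 1)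
  obtain ⟨c, hc⟩ := exists_forall_sum_ssubsets size
    (Q := fun F n d => d.2.Nonempty ∧ (∀ t ∈ d.2, n ≤ t) ∧
      ∀ f ∈ F, ∀ K ⊆ F, ∀ x ≤ n, (x = 0 ∨ x ∈ star p (C K)) →
        x + (d.1 + ∑ t ∈ d.2, f t) ∈ star p (C K))
    fun F n => Prod.exists.2 (exists_shiftedSum_add_mem_star hp hJ hC F n)
  refine ⟨fun F => (c F).1, fun F => (c F).2, ⟨fun F => (hc F).1, fun F G hFG x hx y hy => ?_⟩,
    fun F f hf K hK x hx => (hc F).2.2 f hf K hK x ?_⟩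
  · calc x
      _ ≤ (c F).2.sup id := le_sup (f := id) hx
      _ < size G (c F) := by simp only [size]; omega
      _ ≤ ∑ K ∈ G.ssubsets, size G (c K) :=
          single_le_sum (f := fun K => size G (c K)) (fun _ _ => Nat.zero_le _)
            (mem_ssubsets.2 hFG)
      _ ≤ y := (hc G).2.1 y hy
  · exact hx.trans (sum_le_sum fun K _ => Nat.le_add_right _ _)

theorem IsPointedChain.chainSum_mem_star {X : Type*} [DecidableEq X] {g : Finset X → X → ℕ}
    {C : Finset X → Set ℕ}
    (hg : ∀ F, ∀ f ∈ F, ∀ K ⊆ F, ∀ x ≤ chainBound g F, (x = 0 ∨ x ∈ star p (C K)) →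
      x + g F f ∈ star p (C K))
    {G : ℕ → Finset X} {f : ℕ → X} (h : IsPointedChain G f) {K : Finset X} {s : Finset ℕ}
    (hs : s.Nonempty) (hK : ∀ i ∈ s, K ⊆ G i) : chainSum g G f s ∈ star p (C K) := by
  induction s using Finset.induction_on_max with
  | empty => exact absurd hs not_nonempty_empty
  | insert a s hsa ih =>
    have hsum : chainSum g G f (insert a s) = chainSum g G f s + g (G a) (f a) := by
      rw [chainSum, sum_insert fun ha => (hsa a ha).false, add_comm, chainSum]
    rw [hsum]
    refine hg (G a) (f a) (h.mem a) K (hK a (mem_insert_self a s)) _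
      (h.chainSum_le_chainBound g fun i hi => h.strictMono (hsa i hi)) ?_
    rcases s.eq_empty_or_nonempty with rfl | hs'
    · exact .inl sum_empty
    · exact .inr (ih hs' fun i hi => hK i (mem_insert_of_mem hi))

theorem exists_isIncreasing_chainSum_mem (hp : IdempotentUF p) (hJ : MemJ p)
    {C : Finset (ℕ → ℕ) → Set ℕ} (hC : ∀ F, C F ∈ p) :
    ∃ (α : Finset (ℕ → ℕ) → ℕ) (H : Finset (ℕ → ℕ) → Finset ℕ), IsIncreasing H ∧
      ∀ G f, IsPointedChain G f → ∀ (K : Finset (ℕ → ℕ)) (s : Finset ℕ), s.Nonempty →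
        (∀ i ∈ s, K ⊆ G i) → chainSum (shiftedSum α H) G f s ∈ C K := by
  classical
  obtain ⟨α, H, hH, hαH⟩ := exists_isIncreasing_shiftedSum_add_mem_star hp hJ hC
  exact ⟨α, H, hH, fun G f h K s hs hK => (h.chainSum_mem_star hαH hs hK).1⟩

theorem eventually_tensor_forall_le_cons_mem {X : Type*} {m : ℕ}
    {p : Fin (m + 1) → Ultrafilter ℕ} (B : Finset X → Set (Fin (m + 1) → ℕ)) (b : ℕ)
    (F : Finset X) :
    ∀ᶠ v in tensor m fun i => p i.succ, ∀ K ∈ F.powerset, ∀ x ∈ Iic b,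
      (∀ᶠ w in tensor m fun i => p i.succ, (Fin.cons x w : Fin (m + 1) → ℕ) ∈ B K) →
        (Fin.cons x v : Fin (m + 1) → ℕ) ∈ B K := by
  simp only [eventually_all_finset, eventually_imp_distrib_left]
  exact fun K _ x _ h => h

theorem exists_isIncreasing_chainSums_mem {m : ℕ} {p : Fin m → Ultrafilter ℕ}
    (hp : ∀ l, IdempotentUF (p l)) (hJ : ∀ l, MemJ (p l))
    {B : Finset (ℕ → ℕ) → Set (Fin m → ℕ)} (hB : ∀ F, B F ∈ tensor m p) :
    ∃ (α : Fin m → Finset (ℕ → ℕ) → ℕ) (H : Fin m → Finset (ℕ → ℕ) → Finset ℕ),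
      (∀ l, IsIncreasing (H l)) ∧
      ∀ G f, IsPointedChain G f → ∀ K β, IsBlockSequence β → (∀ l, ∀ i ∈ β l, K ⊆ G i) →
        (fun l => chainSum (shiftedSum (α l) (H l)) G f (β l)) ∈ B K := by
  classical
  induction m with
  | zero =>
    refine ⟨Fin.rec0, Fin.rec0, Fin.rec0, fun G f _ K β _ _ => ?_⟩
    rw [Subsingleton.elim (fun l => chainSum _ _ _ _) Fin.elim0]
    exact hB K
  | succ m ih =>
    obtain ⟨α₀, H₀, hH₀, head_mem⟩ := exists_isIncreasing_chainSum_mem (hp 0) (hJ 0) hB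
    -- The first coordinate `x` of a vector is bounded once the remaining blocks lie above some `F`.
    obtain ⟨α, H, hH, tail_mem⟩ := ih (fun l => hp l.succ) (fun l => hJ l.succ) fun F =>
      eventually_tensor_forall_le_cons_mem B (chainBound (shiftedSum α₀ H₀) F) F
    refine ⟨Fin.cons α₀ α, Fin.cons H₀ H, Fin.forall_fin_succ.2 ⟨hH₀, hH⟩,
      fun G f h K β hβ hK => ?_⟩
    obtain ⟨M, hM, hmax⟩ := (β 0).exists_max_image id (hβ.nonempty 0)
    have head_le : chainSum (shiftedSum α₀ H₀) G f (β 0) ≤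
        chainBound (shiftedSum α₀ H₀) (G (M + 1)) :=
      h.chainSum_le_chainBound _ fun i hi => h.strictMono (Nat.lt_succ_of_le (hmax i hi))
    have hcons := tail_mem G f h (G (M + 1)) _ hβ.tail
      (fun l i hi => h.strictMono.monotone (hβ.lt 0 l.succ l.succ_pos M hM i hi))
      K (mem_powerset.2 ((hK 0 M hM).trans (h.strictMono.monotone M.le_succ)))
      _ (mem_Iic.2 head_le) (head_mem G f h K (β 0) (hβ.nonempty 0) (hK 0))
    rw [← Fin.cons_self_tail fun l => chainSum _ _ _ _]
    exact hcons

end Selection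

theorem polynomial_image_stronger_CST_II_general (m : ℕ) (B : Set (Fin m → ℕ)) :
    (∃ (α : Fin m → Finset (ℕ → ℕ) → ℕ) (H : Fin m → Finset (ℕ → ℕ) → Finset ℕ),
      (∀ (j : Fin m) (F : Finset (ℕ → ℕ)), F.Nonempty → (H j F).Nonempty) ∧
      (∀ (j : Fin m) (F G : Finset (ℕ → ℕ)), F.Nonempty → F ⊂ G →
        ∀ x ∈ H j F, ∀ y ∈ H j G, x < y) ∧
      (∀ G : ℕ → Finset (ℕ → ℕ),
        (∀ i, (G i).Nonempty) → (∀ i j, i < j → G i ⊂ G j) →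
        ∀ f : ℕ → ℕ → ℕ, (∀ i, f i ∈ G i) →
        ∀ β : Fin m → Finset ℕ,
          (∀ l, (β l).Nonempty) →
          (∀ l l' : Fin m, l < l' → ∀ x ∈ β l, ∀ y ∈ β l', x < y) →
          (fun l => ∑ i ∈ β l, (α l (G i) + ∑ t ∈ H l (G i), f i t)) ∈ B))
    ↔
    (∃ p : Fin m → Ultrafilter ℕ,
      (∀ i, IdempotentUF (p i)) ∧ (∀ i, MemJ (p i)) ∧ B ∈ tensor m p) := by
  constructor
  · rintro ⟨α, H, hH, -, hB⟩
    choose p hp hJ hpα using fun l => exists_idempotentUF_memJ_le_chainFilter (α := α l) (hH l)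
    refine ⟨p, hp, hJ, mem_tensor_of_forall_isPointedChain hpα ∅ fun G f h _ β hβ => ?_⟩
    exact hB G (fun i => ⟨f i, h.mem i⟩) (fun _ _ hij => h.strictMono hij) f h.mem β
      hβ.nonempty hβ.lt
  · rintro ⟨p, hp, hJ, hB⟩
    obtain ⟨α, H, hH, hαH⟩ := exists_isIncreasing_chainSums_mem hp hJ fun _ => hB
    refine ⟨α, H, fun l F _ => (hH l).nonempty F, fun l F G _ => (hH l).lt F G, ?_⟩
    intro G _ hG f hf β hβ hβ_lt
    exact hαH G f ⟨fun i j => hG i j, hf⟩ ∅ β ⟨hβ, hβ_lt⟩ fun _ _ _ => empty_subset _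

/-- Polynomial Milliken–Taylor / stronger central sets theorem, several idempotents,
composed with a polynomial `h : ℕ^m → ℕ` with no constant term. -/
theorem polynomial_image_stronger_CST_II (m : ℕ) (hm : 1 ≤ m)
    (h : (Fin m → ℕ) → ℕ)
    (hh : ∃ Q : MvPolynomial (Fin m) ℕ,
      MvPolynomial.coeff 0 Q = 0 ∧ ∀ v, h v = MvPolynomial.eval v Q)
    (A : Set ℕ) :
    (∃ (α : Fin m → Finset (ℕ → ℕ) → ℕ) (H : Fin m → Finset (ℕ → ℕ) → Finset ℕ),
      (∀ (j : Fin m) (F : Finset (ℕ → ℕ)), F.Nonempty → (H j F).Nonempty) ∧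
      (∀ (j : Fin m) (F G : Finset (ℕ → ℕ)), F.Nonempty → F ⊂ G →
        ∀ x ∈ H j F, ∀ y ∈ H j G, x < y) ∧
      (∀ G : ℕ → Finset (ℕ → ℕ),
        (∀ i, (G i).Nonempty) → (∀ i j, i < j → G i ⊂ G j) →
        ∀ f : ℕ → ℕ → ℕ, (∀ i, f i ∈ G i) →
        ∀ β : Fin m → Finset ℕ,
          (∀ l, (β l).Nonempty) →
          (∀ l l' : Fin m, l < l' → ∀ x ∈ β l, ∀ y ∈ β l', x < y) →
          h (fun l => ∑ i ∈ β l, (α l (G i) + ∑ t ∈ H l (G i), f i t)) ∈ A))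
    ↔
    (∃ p : Fin m → Ultrafilter ℕ,
      (∀ i, IdempotentUF (p i)) ∧ (∀ i, MemJ (p i)) ∧ A ∈ (tensor m p).map h) := by
  exact polynomial_image_stronger_CST_II_general m (h ⁻¹' A)

end MultiCST
end

section
/- Let m ∈ ℕ with m ≥ 1, let h : ℕ^m → ℕ be a polynomial in m variables with coefficients in ℕ and no constant term, and let p₁,…,p_m be minimal idempotent ultrafilters on ℕ. Then for every A ∈ h̃(⊗_{i=1}^m p_i) (where h̃ denotes the pushforward of ultrafilters along h) and every T ∈ 𝒫_f(ℙ), there exist functions α₁,…,α_m : 𝒫_f(ℕ^ℕ) → ℕ and H₁,…,H_m : 𝒫_f(ℕ^ℕ) → 𝒫_f(ℕ) such that (1) whenever G ⊊ K in 𝒫_f(ℕ^ℕ), max H_j(G) < min H_j(K) for every j ∈ {1,…,m}; (2) whenever G₁ ⊊ G₂ ⊊ ⋯ ⊊ G_n ⊊ ⋯ is an infinite strictly increasing chain in 𝒫_f(ℕ^ℕ), f_i ∈ G_i for each i ∈ ℕ, β₁ < ⋯ < β_m are in 𝒫_f(ℕ), and P₁,…,P_m ∈ T, then h(Σ_{i∈β₁}α₁(G_i)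 + P₁(Σ_{i∈β₁}Σ_{t∈H₁(G_i)}f_i(t)), …, Σ_{i∈β_m}α_m(G_i) + P_m(Σ_{i∈β_m}Σ_{t∈H_m(G_i)}f_i(t))) ∈ A; and (3) if p₁ = ⋯ = p_m = p for a single minimal idempotent p, then the functions can be chosen with α₁ = ⋯ = α_m and H₁ = ⋯ = H_m. -/
namespace MultiCST

/-- The pair of families `(α, H)` witnesses the polynomial multidimensional conclusion for
`A` via `h` and the polynomials in `T` (infinitary form). -/
def GoodWitness (m : ℕ) (h : (Fin m → ℕ) → ℕ) (A : Set ℕ) (T : Finset (ℕ → ℕ))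
    (α : Fin m → Finset (ℕ → ℕ) → ℕ) (H : Fin m → Finset (ℕ → ℕ) → Finset ℕ) : Prop :=
  (∀ (j : Fin m) (F : Finset (ℕ → ℕ)), F.Nonempty → (H j F).Nonempty) ∧
  (∀ (j : Fin m) (F G : Finset (ℕ → ℕ)), F.Nonempty → F ⊂ G →
    ∀ x ∈ H j F, ∀ y ∈ H j G, x < y) ∧
  (∀ G : ℕ → Finset (ℕ → ℕ),
    (∀ i, (G i).Nonempty) → (∀ i j, i < j → G i ⊂ G j) →
    ∀ f : ℕ → ℕ → ℕ, (∀ i, f i ∈ G i) →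
    ∀ β : Fin m → Finset ℕ,
      (∀ l, (β l).Nonempty) →
      (∀ l l' : Fin m, l < l' → ∀ x ∈ β l, ∀ y ∈ β l', x < y) →
      ∀ P : Fin m → ℕ → ℕ, (∀ l, P l ∈ T) →
      h (fun l => (∑ i ∈ β l, α l (G i)) +
          P l (∑ i ∈ β l, ∑ t ∈ H l (G i), f i t)) ∈ A)

/-!
Call `A ⊆ ℤ` large if it belongs to an ultrafilter `q + p`. If `p` is minimal, every `q` admits an
`r` with `r + (q + p) = p`, and compactness turns this into a finite-cover property: finitely many
translates of a large set meet every large set in a large set. Polynomial exhaustion together with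
colour focusing then shows that the members of `p` are polynomial J-sets.

For the theorem, a member of the tensor product is unfolded into sections `C l` in `p l`, depending
on the earlier coordinates. The pairs `(α, H)` are built by recursion on finite sets of functions:
at `F` the polynomial J-set property is applied to the intersection of all conditions
`x + P y + b ∈ C⋆` with `x`, `y` bounded by the sums available over the proper subsets of `F`.
Only finitely many conditions arise, and `z ↦ P (y + z) - P y` is again a polynomial without
constant term.
-/

open Finset

section PolynomialMaps

variable {M Z R : Type*} [AddCommMonoid M] [AddCommGroup Z] [CommRing R]

/-- The translate of a map `φ` by `y`, normalised to vanish at `0`. -/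
def recenter (y : M) : (M → Z) →+ (M → Z) where
  toFun φ z := φ (y + z) - φ y
  map_zero' := by ext; simp
  map_add' φ χ := by ext; simp only [Pi.add_apply]; abel

lemma recenter_apply (y z : M) (φ : M → Z) : recenter y φ z = φ (y + z) - φ y := rfl

variable (M Z) in
/-- The group of polynomial maps `M → Z` of degree at most `d` vanishing at `0`: the maps for which
`z ↦ φ (y + z) - φ y - φ z` has degree at most `d - 1` for every `y`. -/
def polyMaps : ℕ → AddSubgroup (M → Z)
  | 0 => ⊥
  | d + 1 => (Pi.evalAddMonoidHom (fun _ : M => Z) 0).ker ⊓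
      ⨅ y, (polyMaps d).comap (recenter y - AddMonoidHom.id (M → Z))

lemma mem_polyMaps_succ {d : ℕ} {φ : M → Z} :
    φ ∈ polyMaps M Z (d + 1) ↔ φ 0 = 0 ∧ ∀ y, recenter y φ - φ ∈ polyMaps M Z d := by
  simp [polyMaps, AddSubgroup.mem_inf, AddSubgroup.mem_iInf, AddMonoidHom.mem_ker]

lemma polyMaps_mono : Monotone (polyMaps M Z) := by
  refine monotone_nat_of_le_succ fun d => ?_
  induction d with
  | zero => exact bot_le
  | succ d ih =>
    intro φ hφ
    obtain ⟨h0, hd⟩ := mem_polyMaps_succ.1 hφ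
    exact mem_polyMaps_succ.2 ⟨h0, fun y => ih (hd y)⟩

lemma apply_zero_of_mem_polyMaps {d : ℕ} {φ : M → Z} (hφ : φ ∈ polyMaps M Z d) : φ 0 = 0 :=
  (mem_polyMaps_succ.1 (polyMaps_mono d.le_succ hφ)).1

lemma recenter_mem_polyMaps {d : ℕ} {φ : M → Z} (y : M) (hφ : φ ∈ polyMaps M Z d) :
    recenter y φ ∈ polyMaps M Z d := by
  have hdiff := (mem_polyMaps_succ.1 (polyMaps_mono d.le_succ hφ)).2 y
  simpa only [sub_add_cancel] using add_mem hdiff hφ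

lemma mem_polyMaps_of_recenter_mem {D d : ℕ} {φ : M → Z} {y : M} (hφ : φ ∈ polyMaps M Z D)
    (hy : recenter y φ ∈ polyMaps M Z d) : φ ∈ polyMaps M Z d := by
  induction D with
  | zero => exact polyMaps_mono d.zero_le hφ
  | succ D ih =>
    rcases lt_or_ge D d with hd | hd
    · exact polyMaps_mono hd hφ
    · refine ih ?_
      simpa only [sub_sub_cancel] using
        sub_mem (polyMaps_mono hd hy) ((mem_polyMaps_succ.1 hφ).2 y)

lemma eval_comp_mem_polyMaps (g : M →+ R) {d : ℕ} {P : Polynomial R} (hd : P.natDegree ≤ d)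
    (h0 : P.eval 0 = 0) : (fun z => P.eval (g z)) ∈ polyMaps M R d := by
  induction d generalizing P with
  | zero =>
    rw [Polynomial.eq_C_of_natDegree_le_zero hd, Polynomial.eval_C] at h0
    rw [Polynomial.eq_C_of_natDegree_le_zero hd, h0]
    simp only [Polynomial.eval_C]
    exact zero_mem _
  | succ d ih =>
    refine mem_polyMaps_succ.2 ⟨by simpa using h0, fun y => ?_⟩
    let Q := Polynomial.taylor (g y) P - P - Polynomial.C (P.eval (g y))
    have hQ : recenter y (fun z => P.eval (g z)) - (fun z => P.eval (g z)) =
        fun z => Q.eval (g z) := by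
      ext z
      simp only [recenter_apply, Pi.sub_apply, Q, map_add, Polynomial.eval_sub,
        Polynomial.taylor_eval, Polynomial.eval_C, add_comm (g y)]
      ring
    have hQd : Q.natDegree ≤ d := by
      rw [Polynomial.natDegree_sub_C, Polynomial.natDegree_le_iff_coeff_eq_zero]
      intro k hk
      rcases (Nat.add_one_le_iff.2 hk).eq_or_lt with rfl | hk
      · rcases hd.eq_or_lt with hP | hP
        · rw [Polynomial.coeff_sub, sub_eq_zero, ← hP, Polynomial.coeff_taylor_natDegree,
            Polynomial.leadingCoeff]
        · exact Polynomial.coeff_eq_zero_of_natDegree_lt <|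
            (Polynomial.natDegree_sub_le _ _).trans_lt (by simpa using hP)
      · exact Polynomial.coeff_eq_zero_of_natDegree_lt <|
          (Polynomial.natDegree_sub_le _ _).trans_lt (by simpa using hd.trans_lt hk)
    rw [hQ]
    exact ih hQd (by simp [Q, Polynomial.taylor_eval, h0])

end PolynomialMaps

section PolynomialExhaustion

variable {M Z : Type*} [AddCommMonoid M] [AddCommGroup Z]

/-- The nonzero classes, modulo maps of degree at most `d`, of the members of `Φ` of degree at most
`d + 1`; they play the role of the leading terms of degree `d + 1`. -/
def leadingClasses (Φ : Set (M → Z)) (d : ℕ) : Set ((M → Z) ⧸ polyMaps M Z d) :=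
  (QuotientAddGroup.mk : (M → Z) → (M → Z) ⧸ polyMaps M Z d) '' (Φ ∩ polyMaps M Z (d + 1)) \ {0}

/-- The weight of a family of polynomial maps: the number of leading classes in each degree,
compared from the top degree downwards. -/
noncomputable def weight (D : ℕ) (Φ : Set (M → Z)) : Colex (Fin D → ℕ) :=
  toColex fun d => (leadingClasses Φ d).ncard

/-- The family obtained from `Φ` in one step of polynomial exhaustion: recentre its nonzero members
at the points of `Y` and subtract `φ₁`. -/
def derivedFamily (Y : Set M) (φ₁ : M → Z) (Φ : Set (M → Z)) : Set (M → Z) :=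
  Set.image2 (fun y φ => recenter y φ - φ₁) Y (Φ \ {0})

lemma leadingClasses_finite {Φ : Set (M → Z)} (hΦ : Φ.Finite) (d : ℕ) :
    (leadingClasses Φ d).Finite :=
  ((hΦ.inter_of_left _).image _).sdiff

lemma derivedFamily_subset_polyMaps {Y : Set M} {φ₁ : M → Z} {Φ : Set (M → Z)} {D : ℕ}
    (hφ₁ : φ₁ ∈ polyMaps M Z D) (hΦ : Φ ⊆ polyMaps M Z D) :
    derivedFamily Y φ₁ Φ ⊆ polyMaps M Z D := by
  rintro _ ⟨y, -, φ, hφ, rfl⟩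
  exact sub_mem (recenter_mem_polyMaps y (hΦ hφ.1)) hφ₁

lemma mk_recenter_sub {D d : ℕ} {φ φ₁ : M → Z} {y : M} (hφ : φ ∈ polyMaps M Z D)
    (hφ₁ : φ₁ ∈ polyMaps M Z (d + 1)) (hχ : recenter y φ - φ₁ ∈ polyMaps M Z (d + 1)) :
    φ ∈ polyMaps M Z (d + 1) ∧
      (QuotientAddGroup.mk (recenter y φ - φ₁) : (M → Z) ⧸ polyMaps M Z d) =
        QuotientAddGroup.mk φ - QuotientAddGroup.mk φ₁ := by
  have hφd : φ ∈ polyMaps M Z (d + 1) :=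
    mem_polyMaps_of_recenter_mem hφ (by simpa only [sub_add_cancel] using add_mem hχ hφ₁)
  refine ⟨hφd, ?_⟩
  rw [QuotientAddGroup.mk_sub, sub_left_inj, QuotientAddGroup.eq_iff_sub_mem]
  exact (mem_polyMaps_succ.1 hφd).2 y

lemma leadingClasses_derivedFamily_subset {Y : Set M} {φ₁ : M → Z} {Φ : Set (M → Z)} {D d : ℕ}
    (hΦ : Φ ⊆ polyMaps M Z D) (hφ₁ : φ₁ ∈ polyMaps M Z d) :
    leadingClasses (derivedFamily Y φ₁ Φ) d ⊆ leadingClasses Φ d := by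
  refine Set.sdiff_subset_sdiff_left ?_
  rintro _ ⟨_, ⟨⟨y, -, φ, hφ, rfl⟩, hχ⟩, rfl⟩
  obtain ⟨hφd, hmk⟩ := mk_recenter_sub (hΦ hφ.1) (polyMaps_mono d.le_succ hφ₁) hχ
  refine ⟨φ, ⟨hφ.1, hφd⟩, ?_⟩
  simp only [hmk, (QuotientAddGroup.eq_zero_iff φ₁).2 hφ₁, sub_zero]

lemma ncard_leadingClasses_derivedFamily_lt {Y : Set M} {φ₁ : M → Z} {Φ : Set (M → Z)} {D e : ℕ}
    (hfin : Φ.Finite) (hΦ : Φ ⊆ polyMaps M Z D) (hφ₁ : φ₁ ∈ Φ \ {0})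
    (hφ₁e : φ₁ ∈ polyMaps M Z (e + 1)) (hmin : ∀ φ ∈ Φ \ {0}, φ ∉ polyMaps M Z e) :
    (leadingClasses (derivedFamily Y φ₁ Φ) e).ncard < (leadingClasses Φ e).ncard := by
  let c₁ : (M → Z) ⧸ polyMaps M Z e := QuotientAddGroup.mk φ₁
  have hc₁ : c₁ ∈ leadingClasses Φ e :=
    ⟨⟨φ₁, ⟨hφ₁.1, hφ₁e⟩, rfl⟩, mt (QuotientAddGroup.eq_zero_iff φ₁).1 (hmin φ₁ hφ₁)⟩
  have hsub : leadingClasses (derivedFamily Y φ₁ Φ) e ⊆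
      (fun c => c - c₁) '' (leadingClasses Φ e \ {c₁}) := by
    rintro _ ⟨⟨_, ⟨⟨y, -, φ, hφ, rfl⟩, hχ⟩, rfl⟩, hne⟩
    obtain ⟨hφe, hmk⟩ := mk_recenter_sub (hΦ hφ.1) hφ₁e hχ
    refine ⟨QuotientAddGroup.mk φ, ⟨⟨⟨φ, ⟨hφ.1, hφe⟩, rfl⟩, ?_⟩, fun hc => hne ?_⟩, hmk.symm⟩
    · exact mt (QuotientAddGroup.eq_zero_iff φ).1 (hmin φ hφ)
    · exact hmk.trans (sub_eq_zero.2 hc)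
  have hfinΦ := leadingClasses_finite hfin e
  calc (leadingClasses (derivedFamily Y φ₁ Φ) e).ncard
      ≤ (leadingClasses Φ e \ {c₁}).ncard :=
        (Set.ncard_le_ncard hsub (hfinΦ.sdiff.image _)).trans (Set.ncard_image_le hfinΦ.sdiff)
    _ < (leadingClasses Φ e).ncard := Set.ncard_sdiff_singleton_lt_of_mem hc₁ hfinΦ

lemma toColex_lt_toColex_of_le_of_lt {ι α : Type*} [LinearOrder ι] [WellFoundedGT ι]
    [LinearOrder α] {u v : ι → α} {e : ι} (he : u e < v e) (hle : ∀ d, e < d → u d ≤ v d) :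
    toColex u < toColex v := by
  rcases lt_trichotomy (toColex u) (toColex v) with huv | heq | ⟨i, hagree, hi⟩
  · exact huv
  · exact (he.ne (congrFun (toColex.injective heq) e)).elim
  · refine absurd hi ?_
    rcases lt_trichotomy (α := ι) i e with hie | rfl | hei
    · exact (he.ne' (hagree e hie)).elim
    · exact he.not_gt
    · exact (hle i hei).not_gt

lemma weight_derivedFamily_lt {Y : Set M} {φ₁ : M → Z} {Φ : Set (M → Z)} {D e : ℕ}
    (hfin : Φ.Finite) (hΦ : Φ ⊆ polyMaps M Z D) (heD : e < D) (hφ₁ : φ₁ ∈ Φ \ {0})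
    (hφ₁e : φ₁ ∈ polyMaps M Z (e + 1)) (hmin : ∀ φ ∈ Φ \ {0}, φ ∉ polyMaps M Z e) :
    weight D (derivedFamily Y φ₁ Φ) < weight D Φ :=
  toColex_lt_toColex_of_le_of_lt (e := ⟨e, heD⟩)
    (ncard_leadingClasses_derivedFamily_lt hfin hΦ hφ₁ hφ₁e hmin)
    fun d hd => Set.ncard_le_ncard
      (leadingClasses_derivedFamily_subset hΦ (polyMaps_mono (Nat.succ_le_of_lt hd) hφ₁e))
      (leadingClasses_finite hfin d)

lemma exists_mem_lowest_degree {Φ : Set (M → Z)} {D : ℕ} (hΦ : Φ ⊆ polyMaps M Z D)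
    (hne : (Φ \ {0}).Nonempty) :
    ∃ e < D, ∃ φ₁ ∈ Φ \ {0}, φ₁ ∈ polyMaps M Z (e + 1) ∧
      ∀ φ ∈ Φ \ {0}, φ ∉ polyMaps M Z e := by
  classical
  have hex : ∃ d, ∃ φ ∈ Φ \ {0}, φ ∈ polyMaps M Z d :=
    hne.elim fun φ hφ => ⟨D, φ, hφ, hΦ hφ.1⟩
  obtain ⟨φ₁, hφ₁, hφ₁d⟩ := Nat.find_spec hex
  obtain ⟨e, he⟩ : ∃ e, Nat.find hex = e + 1 := by
    refine Nat.exists_eq_succ_of_ne_zero fun h0 => hφ₁.2 ?_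
    rw [h0] at hφ₁d
    exact hφ₁d
  have heD : Nat.find hex ≤ D := Nat.find_min' hex (hne.elim fun φ hφ => ⟨φ, hφ, hΦ hφ.1⟩)
  exact ⟨e, by omega, φ₁, hφ₁, he ▸ hφ₁d,
    fun φ hφ hφe => Nat.find_min hex (m := e) (by omega) ⟨φ, hφ, hφe⟩⟩

end PolynomialExhaustion

section Recurrence

variable {M Z : Type*} [AddCommMonoid M] [AddCommGroup Z]

/-- An abstract notion of largeness for subsets of a group, covering the sets that meet a fixed
minimal left ideal of ultrafilters: monotone, translation invariant, and such that finitely many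
translates of a large set meet every large set in a large set. -/
structure IsLargeness (Large : Set Z → Prop) : Prop where
  mono : ∀ ⦃A B : Set Z⦄, A ⊆ B → Large A → Large B
  translate : ∀ ⦃A : Set Z⦄, Large A → ∀ k, Large {a | a + k ∈ A}
  exists_finset : ∀ ⦃A : Set Z⦄, Large A →
    ∃ S : Finset Z, ∀ B, Large B → ∃ s ∈ S, Large {b ∈ B | b + s ∈ A}

/-- Polynomial recurrence of the family `Φ` along the finite sums of the sequence `x`: every large
set has largely many points returning to it under all `φ ∈ Φ`, along a late finite sum. -/
def IsRecurrent (Large : Set Z → Prop) (x : ℕ → M) (Φ : Set (M → Z)) : Prop :=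
  ∀ ⦃A : Set Z⦄, Large A → ∀ N : ℕ, ∃ β : Finset ℕ, β.Nonempty ∧ (∀ t ∈ β, N < t) ∧
    Large {a ∈ A | ∀ φ ∈ Φ, a + φ (∑ t ∈ β, x t) ∈ A}

/-- The set `V` is focused at the colours `S`: for each `s ∈ S` some finite sum of `x` beyond `N`
moves `V` into the translate `A - s` under every `φ ∈ Φ`. -/
def IsFocused (x : ℕ → M) (Φ : Set (M → Z)) (A : Set Z) (N : ℕ) (S : Finset Z) (V : Set Z) : Prop :=
  ∀ s ∈ S, ∃ γ : Finset ℕ, γ.Nonempty ∧ (∀ t ∈ γ, N < t) ∧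
    ∀ a ∈ V, ∀ φ ∈ Φ, a + φ (∑ t ∈ γ, x t) + s ∈ A

variable {Large : Set Z → Prop} {x : ℕ → M} {Φ : Set (M → Z)} {A V : Set Z} {N : ℕ} {S : Finset Z}
  {s : Z}

lemma IsFocused.exists_large_return (hL : IsLargeness Large)
    (hfoc : IsFocused x (Φ \ {0}) A N S V) (hs : s ∈ S) (hV : Large {b ∈ V | b + s ∈ A}) :
    ∃ β : Finset ℕ, β.Nonempty ∧ (∀ t ∈ β, N < t) ∧
      Large {a ∈ A | ∀ φ ∈ Φ, a + φ (∑ t ∈ β, x t) ∈ A} := by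
  obtain ⟨γ, hγ, hγN, hγA⟩ := hfoc s hs
  refine ⟨γ, hγ, hγN, hL.mono ?_ (hL.translate hV (-s))⟩
  rintro a ⟨haV, haA⟩
  rw [neg_add_cancel_right] at haA
  refine ⟨haA, fun φ hφ => ?_⟩
  by_cases h0 : φ = 0
  · simpa [h0] using haA
  · convert hγA _ haV φ ⟨hφ, h0⟩ using 1
    abel

lemma IsFocused.exists_insert [DecidableEq Z] (hL : IsLargeness Large) (hΦ : ∀ φ ∈ Φ, φ 0 = 0)
    {φ₁ : M → Z} (hrec : ∀ Y : Set M, Y.Finite → IsRecurrent Large x (derivedFamily Y φ₁ Φ))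
    (hfoc : IsFocused x (Φ \ {0}) A N S V) (hV : Large {b ∈ V | b + s ∈ A}) :
    ∃ V', Large V' ∧ IsFocused x (Φ \ {0}) A N (insert s S) V' := by
  choose! γ _ hγN hγA using hfoc
  let Y : Set M := insert 0 ((fun r => ∑ t ∈ γ r, x t) '' S)
  obtain ⟨β, hβ, hβK, hβV⟩ := hrec Y ((S.finite_toSet.image _).insert 0) hV
    (max N ((S.biUnion γ).sup id))
  have hβN : ∀ t ∈ β, N < t := fun t ht => (le_max_left _ _).trans_lt (hβK t ht)
  refine ⟨_, hL.translate hβV (φ₁ (∑ t ∈ β, x t)), fun r hr => ?_⟩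
  have hmove : ∀ a, a + φ₁ (∑ t ∈ β, x t) ∈ {a ∈ {b ∈ V | b + s ∈ A} |
      ∀ φ ∈ derivedFamily Y φ₁ Φ, a + φ (∑ t ∈ β, x t) ∈ {b ∈ V | b + s ∈ A}} →
      ∀ y ∈ Y, ∀ φ ∈ Φ \ {0}, a + (φ (y + ∑ t ∈ β, x t) - φ y) ∈ {b ∈ V | b + s ∈ A} := by
    intro a ha y hy φ hφ
    convert ha.2 _ (Set.mem_image2_of_mem hy hφ) using 1
    simp only [Pi.sub_apply, recenter_apply]
    abel
  rcases Finset.mem_insert.1 hr with rfl | hr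
  · refine ⟨β, hβ, hβN, fun a ha φ hφ => ?_⟩
    simpa [hΦ φ hφ.1] using (hmove a ha 0 (Set.mem_insert _ _) φ hφ).2
  · have hdisj : Disjoint (γ r) β := Finset.disjoint_left.2 fun t ht htβ =>
      (hβK t htβ).not_ge <| le_max_of_le_right <|
        Finset.le_sup (f := id) (Finset.mem_biUnion.2 ⟨r, hr, ht⟩)
    refine ⟨γ r ∪ β, hβ.mono subset_union_right,
      fun t ht => (Finset.mem_union.1 ht).elim (hγN r hr t) (hβN t), fun a ha φ hφ => ?_⟩
    have hret := hγA r hr _ (hmove a ha _ (Set.mem_insert_of_mem _ ⟨r, hr, rfl⟩) φ hφ).1 φ hφ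
    rw [sum_union hdisj]
    convert hret using 1
    abel

/-- Colour focusing: were no return found, the number of focused colours could be increased past the
size of the finite set of translates attached to `A`. -/
lemma IsRecurrent.of_derivedFamily (hL : IsLargeness Large) (hΦ : ∀ φ ∈ Φ, φ 0 = 0) {φ₁ : M → Z}
    (hrec : ∀ Y : Set M, Y.Finite → IsRecurrent Large x (derivedFamily Y φ₁ Φ)) :
    IsRecurrent Large x Φ := by
  classical
  intro A hA N
  obtain ⟨C, hC⟩ := hL.exists_finset hA
  by_contra hnot
  have hfocus : ∀ n : ℕ, ∃ S ⊆ C, #S = n ∧ ∃ V, Large V ∧ IsFocused x (Φ \ {0}) A N S V := by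
    intro n
    induction n with
    | zero => exact ⟨∅, empty_subset C, card_empty, A, hA, fun _ h => absurd h (notMem_empty _)⟩
    | succ n ih =>
      obtain ⟨S, hSC, hcard, V, hV, hfoc⟩ := ih
      obtain ⟨s, hs, hsV⟩ := hC V hV
      have hsS : s ∉ S := fun hsS => hnot (hfoc.exists_large_return hL hsS hsV)
      exact ⟨insert s S, insert_subset hs hSC, by rw [card_insert_of_notMem hsS, hcard],
        hfoc.exists_insert hL hΦ hrec hsV⟩
  obtain ⟨S, hSC, hcard, -⟩ := hfocus (#C + 1)
  have := card_le_card hSC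
  omega

lemma IsRecurrent.of_forall_eq_zero (hL : IsLargeness Large) (hΦ : ∀ φ ∈ Φ, φ = 0) :
    IsRecurrent Large x Φ := by
  intro A hA N
  refine ⟨{N + 1}, singleton_nonempty _, by simp, hL.mono (fun a ha => ⟨ha, fun φ hφ => ?_⟩) hA⟩
  simpa [hΦ φ hφ] using ha

theorem isRecurrent_of_subset_polyMaps (hL : IsLargeness Large) {D : ℕ} (hfin : Φ.Finite)
    (hΦ : Φ ⊆ polyMaps M Z D) : IsRecurrent Large x Φ := by
  induction hw : weight D Φ using WellFoundedLT.induction generalizing Φ with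
  | ind w ih =>
    subst hw
    by_cases hzero : ∀ φ ∈ Φ, φ = 0
    · exact .of_forall_eq_zero hL hzero
    · push Not at hzero
      obtain ⟨e, heD, φ₁, hφ₁, hφ₁e, hmin⟩ := exists_mem_lowest_degree hΦ hzero
      refine .of_derivedFamily hL (fun φ hφ => apply_zero_of_mem_polyMaps (hΦ hφ))
        (φ₁ := φ₁) fun Y hY => ?_
      exact ih _ (weight_derivedFamily_lt hfin hΦ heD hφ₁ hφ₁e hmin) (hY.image2 _ hfin.sdiff)
        (derivedFamily_subset_polyMaps (hΦ hφ₁.1) hΦ) rfl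

end Recurrence

section PolynomialJSets

/-- The polynomial analogue of a J-set: `A` contains a common translate of the values of finitely
many polynomials without constant term at the sums of finitely many sequences over a common index
set. -/
def IsPolyJSet (A : Set ℕ) : Prop :=
  ∀ F T : Finset (ℕ → ℕ), (∀ P ∈ T, IsPolyZeroConst P) →
    ∃ (a : ℕ) (β : Finset ℕ), β.Nonempty ∧ ∀ f ∈ F, ∀ P ∈ T, a + P (∑ t ∈ β, f t) ∈ A

lemma IsPolyJSet.exists_gt {A : Set ℕ} (hA : IsPolyJSet A) (F : Finset (ℕ → ℕ))
    {T : Finset (ℕ → ℕ)} (hT : ∀ P ∈ T, IsPolyZeroConst P) (N : ℕ) :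
    ∃ (a : ℕ) (β : Finset ℕ), β.Nonempty ∧ (∀ t ∈ β, N < t) ∧
      ∀ f ∈ F, ∀ P ∈ T, a + P (∑ t ∈ β, f t) ∈ A := by
  classical
  obtain ⟨a, β, hβ, hβA⟩ := hA (F.image fun f t => f (t + (N + 1))) T hT
  refine ⟨a, β.map (addRightEmbedding (N + 1)), hβ.map, ?_, fun f hf P hP => ?_⟩
  · simp only [mem_map, addRightEmbedding_apply]
    rintro _ ⟨t, -, rfl⟩
    omega
  · rw [sum_map]
    exact hβA _ (mem_image_of_mem _ hf) P hP

namespace IsPolyZeroConst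

variable {P : ℕ → ℕ}

lemma map_zero (hP : IsPolyZeroConst P) : P 0 = 0 := by
  obtain ⟨R, h0, hR⟩ := hP
  rw [hR, ← Polynomial.coeff_zero_eq_eval_zero, h0]

lemma exists_add_eq (hP : IsPolyZeroConst P) (y : ℕ) :
    ∃ Q, IsPolyZeroConst Q ∧ ∀ z, P (y + z) = P y + Q z := by
  obtain ⟨R, -, hR⟩ := hP
  let S := Polynomial.taylor y R
  have hS : ∀ z, P (y + z) = P y + (S.divX * Polynomial.X).eval z := fun z =>
    calc P (y + z) = S.eval z := by rw [hR, Polynomial.taylor_eval, add_comm]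
      _ = (S.divX * Polynomial.X + Polynomial.C (S.coeff 0)).eval z := by
        rw [Polynomial.divX_mul_X_add]
      _ = P y + (S.divX * Polynomial.X).eval z := by
        rw [Polynomial.eval_add, Polynomial.eval_C, Polynomial.taylor_coeff_zero, hR, add_comm]
  exact ⟨_, ⟨S.divX * Polynomial.X, by simp, fun _ => rfl⟩, hS⟩

lemma monotone (hP : IsPolyZeroConst P) : Monotone P := by
  obtain ⟨R, -, hR⟩ := hP
  intro a b hab
  simp only [hR, Polynomial.eval_eq_sum_range]
  gcongr

lemma exists_comp_mem_polyMaps (hP : IsPolyZeroConst P) (M : Type*) [AddCommMonoid M] :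
    ∃ d, ∀ g : M →+ ℕ, (fun z => (P (g z) : ℤ)) ∈ polyMaps M ℤ d := by
  obtain ⟨R, h0, hR⟩ := hP
  let R' := R.map (Nat.castRingHom ℤ)
  refine ⟨R'.natDegree, fun g => ?_⟩
  have hPR : (fun z => (P (g z) : ℤ)) =
      fun z => R'.eval ((Nat.castAddMonoidHom ℤ).comp g z) := by
    ext z
    simp [R', hR]
  rw [hPR]
  refine eval_comp_mem_polyMaps _ le_rfl ?_
  simp [R', ← Polynomial.coeff_zero_eq_eval_zero, h0]

end IsPolyZeroConst

end PolynomialJSets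

section MinimalIdempotents

lemma exists_add_add_eq_of_minimal {M : Type*} [AddSemigroup M] [TopologicalSpace M]
    [CompactSpace M] [T2Space M] (hcont : ∀ r : M, Continuous (· + r)) {p : M} (hp : p + p = p)
    (hmin : ∀ q, q + q = q → q + p = q → p + q = q → q = p) (q : M) : ∃ r, r + (q + p) = p := by
  obtain ⟨e, ⟨r, rfl⟩, he⟩ := exists_idempotent_in_compact_add_subsemigroup hcont
    (Set.range (· + (q + p))) ⟨_, q, rfl⟩ (isCompact_range (hcont _)) (by
      rintro _ ⟨x, rfl⟩ _ ⟨y, rfl⟩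
      exact ⟨x + (q + p) + y, add_assoc _ _ _⟩)
  set e := r + (q + p)
  have hep : e + p = e := by simp only [e, add_assoc, hp]
  have hpe : p + e = p := by
    refine hmin _ ?_ (by rw [add_assoc, hep]) (by rw [← add_assoc, hp])
    calc p + e + (p + e) = p + (e + p + e) := by simp only [add_assoc]
      _ = p + e := by rw [hep, he]
  exact ⟨p + r, by rw [add_assoc]; exact hpe⟩

attribute [local instance] Ultrafilter.add Ultrafilter.addSemigroup

lemma uAdd_eq_add (p q : Ultrafilter ℕ) : uAdd p q = p + q :=
  Ultrafilter.coe_injective (Filter.ext fun _ => Iff.rfl)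

lemma mem_add_iff {p q : Ultrafilter ℕ} {A : Set ℕ} :
    A ∈ p + q ↔ {x | {y | x + y ∈ A} ∈ q} ∈ p := Iff.rfl

lemma mem_pure_add_iff {n : ℕ} {q : Ultrafilter ℕ} {A : Set ℕ} :
    A ∈ pure n + q ↔ {y | n + y ∈ A} ∈ q := Iff.rfl

lemma pure_add_comm (n : ℕ) (q : Ultrafilter ℕ) : pure n + q = q + pure n := by
  refine Ultrafilter.coe_injective (Filter.ext fun A => ?_)
  change {y | n + y ∈ A} ∈ q ↔ {x | x + n ∈ A} ∈ q
  simp only [add_comm n]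

lemma IsMinimalIdempotent.exists_add_add_eq {p : Ultrafilter ℕ} (hp : IsMinimalIdempotent p)
    (q : Ultrafilter ℕ) : ∃ r, r + (q + p) = p := by
  obtain ⟨hpp, hmin⟩ := hp
  simp only [IdempotentUF, uAdd_eq_add] at hpp hmin
  exact exists_add_add_eq_of_minimal Ultrafilter.continuous_add_left hpp hmin q

/-- Largeness relative to the left ideal of ultrafilters generated by `p`, for subsets of `ℤ`:
membership of the natural numbers in the set in some ultrafilter `q + p`. -/
def IsLargeFor (p : Ultrafilter ℕ) (A : Set ℤ) : Prop :=
  ∃ q : Ultrafilter ℕ, (Nat.cast ⁻¹' A : Set ℕ) ∈ q + p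

namespace IsMinimalIdempotent

variable {p : Ultrafilter ℕ} {A : Set ℤ}

lemma isLargeFor_translate (hp : IsMinimalIdempotent p) (hA : IsLargeFor p A) (k : ℤ) :
    IsLargeFor p {a | a + k ∈ A} := by
  obtain ⟨q, hq⟩ := hA
  rcases Int.eq_nat_or_neg k with ⟨n, rfl | rfl⟩
  · obtain ⟨r, hr⟩ := hp.exists_add_add_eq (pure n + q)
    have hqp : q + p = pure n + (q + r + q + p) := by
      calc q + p = q + (r + (pure n + q + p)) := by rw [hr]
        _ = q + r + pure n + (q + p) := by simp only [add_assoc]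
        _ = pure n + (q + r + q + p) := by rw [← pure_add_comm]; simp only [add_assoc]
    rw [hqp, mem_pure_add_iff] at hq
    refine ⟨q + r + q, Filter.mem_of_superset hq fun y hy => ?_⟩
    simpa [add_comm] using hy
  · refine ⟨pure n + q, ?_⟩
    rw [add_assoc, mem_pure_add_iff]
    refine Filter.mem_of_superset hq fun y hy => ?_
    simpa using hy

lemma exists_finset_isLargeFor (hp : IsMinimalIdempotent p) (hA : IsLargeFor p A) :
    ∃ S : Finset ℤ, ∀ B, IsLargeFor p B → ∃ s ∈ S, IsLargeFor p {b ∈ B | b + s ∈ A} := by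
  classical
  obtain ⟨q₀, hq₀⟩ := hA
  have hcover : ∀ q : Ultrafilter ℕ, ∃ n : ℕ, {y : ℕ | ((n + y : ℕ) : ℤ) ∈ A} ∈ q + p := by
    intro q
    obtain ⟨r, hr⟩ := hp.exists_add_add_eq q
    rw [← hr, ← add_assoc] at hq₀
    exact Ultrafilter.nonempty_of_mem (mem_add_iff.1 hq₀)
  obtain ⟨t, ht⟩ := isCompact_univ.elim_finite_subcover
    (fun n : ℕ => (· + p) ⁻¹' {u : Ultrafilter ℕ | {y : ℕ | ((n + y : ℕ) : ℤ) ∈ A} ∈ u})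
    (fun n => (ultrafilter_isOpen_basic _).preimage (Ultrafilter.continuous_add_left p))
    (fun q _ => Set.mem_iUnion.2 (hcover q))
  refine ⟨t.image Nat.cast, fun B ⟨q, hq⟩ => ?_⟩
  obtain ⟨n, hnt, hn⟩ := Set.mem_iUnion₂.1 (ht (Set.mem_univ q))
  refine ⟨n, mem_image_of_mem _ hnt, q, Filter.mem_of_superset (Filter.inter_mem hq hn) ?_⟩
  rintro y ⟨hyB, hyA⟩
  exact ⟨hyB, by simpa [add_comm] using hyA⟩

lemma isLargeness (hp : IsMinimalIdempotent p) : IsLargeness (IsLargeFor p) where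
  mono _ _ hAB := fun ⟨q, hq⟩ => ⟨q, Filter.mem_of_superset hq fun _ hn => hAB hn⟩
  translate _ hA k := hp.isLargeFor_translate hA k
  exists_finset _ hA := hp.exists_finset_isLargeFor hA

theorem isPolyJSet (hp : IsMinimalIdempotent p) {B : Set ℕ} (hB : B ∈ p) : IsPolyJSet B := by
  intro F T hT
  choose! d hd using fun P hP => (hT P hP).exists_comp_mem_polyMaps ((ℕ → ℕ) → ℕ)
  let Φ : Set (((ℕ → ℕ) → ℕ) → ℤ) := Set.image2 (fun f P z => ((P : ℕ → ℕ) (z f) : ℤ)) F T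
  have hΦ : Φ ⊆ polyMaps ((ℕ → ℕ) → ℕ) ℤ (T.sup d) := by
    rintro _ ⟨f, -, P, hP, rfl⟩
    exact polyMaps_mono (le_sup hP) (hd P hP (Pi.evalAddMonoidHom _ f))
  have hlarge : IsLargeFor p (Nat.cast '' B) := by
    refine ⟨p, ?_⟩
    rw [← uAdd_eq_add, hp.1]
    exact Filter.mem_of_superset hB (Set.subset_preimage_image _ _)
  obtain ⟨β, hβ, -, q, hq⟩ := isRecurrent_of_subset_polyMaps hp.isLargeness
    (x := fun t f => f t) (F.finite_toSet.image2 _ T.finite_toSet) hΦ hlarge 0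
  obtain ⟨a, -, ha⟩ := Ultrafilter.nonempty_of_mem hq
  refine ⟨a, β, hβ, fun f hf P hP => ?_⟩
  obtain ⟨n, hn, hna⟩ := ha _ (Set.mem_image2_of_mem hf hP)
  rw [Finset.sum_apply] at hna
  rwa [← Nat.cast_injective (R := ℤ) (hna.trans (Nat.cast_add _ _).symm)]

end IsMinimalIdempotent

end MinimalIdempotents

section StarSets

/-- The set `C⋆` of the points of `C` at which the translate of `C` still belongs to `u`. -/
def starSet (u : Ultrafilter ℕ) (C : Set ℕ) : Set ℕ := {x ∈ C | {y | x + y ∈ C} ∈ u}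

variable {u : Ultrafilter ℕ} {C : Set ℕ}

lemma IdempotentUF.starSet_mem (hu : IdempotentUF u) (hC : C ∈ u) : starSet u C ∈ u := by
  refine Filter.inter_mem hC ?_
  rw [← hu] at hC
  exact hC

lemma IdempotentUF.setOf_add_mem_starSet_mem (hu : IdempotentUF u) {x : ℕ} (hx : x ∈ starSet u C) :
    {y | x + y ∈ starSet u C} ∈ u := by
  refine Filter.mem_of_superset (hu.starSet_mem hx.2) fun y hy => ⟨hy.1, ?_⟩
  simpa only [add_assoc, Set.mem_ofPred_eq] using hy.2

end StarSets

section TensorSections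

lemma exists_sections_of_mem_tensor {m : ℕ} {p : Fin m → Ultrafilter ℕ} {B : Set (Fin m → ℕ)}
    (hB : B ∈ tensor m p) :
    ∃ C : (l : Fin m) → (Fin l → ℕ) → Set ℕ, (∀ l w, C l w ∈ p l) ∧
      ∀ v : Fin m → ℕ, (∀ l, v l ∈ C l fun i => v (i.castLE l.is_le')) → v ∈ B := by
  induction m with
  | zero =>
    refine ⟨fun l => l.elim0, fun l => l.elim0, fun v _ => ?_⟩
    rw [Subsingleton.elim v fun i => i.elim0]
    exact hB
  | succ m ih =>
    let D : Set ℕ := {x | {w | (Fin.cons x w : Fin (m + 1) → ℕ) ∈ B} ∈ tensor m (Fin.tail p)}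
    have hsections : ∀ x, {w | x ∈ D → (Fin.cons x w : Fin (m + 1) → ℕ) ∈ B} ∈
        tensor m (Fin.tail p) := by
      intro x
      by_cases hx : x ∈ D
      · exact Filter.mem_of_superset hx fun w hw _ => hw
      · exact Filter.univ_mem' fun w hxD => absurd hxD hx
    choose C hCp hCB using fun x => ih (hsections x)
    refine ⟨Fin.cases (motive := fun l => (Fin l → ℕ) → Set ℕ) (fun _ => D)
      (fun j (w : Fin (j + 1) → ℕ) => C (w 0) j (Fin.tail w)), ?_, fun v hv => ?_⟩
    · exact Fin.cases (fun _ => hB) (fun j w => hCp _ j _)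
    · rw [← Fin.cons_self_tail v]
      exact hCB (v 0) (Fin.tail v) (fun j => hv j.succ) (hv 0)

end TensorSections

section Blocks

/-- The pair `(a, H)` extends any partial sum `x + P y` with `x, y ≤ N` within `C⋆`, for all
conditions `C ∈ 𝒞`, polynomials `P ∈ T` and functions `f ∈ F`; the empty partial sum, which need not
lie in `C⋆`, is treated separately. -/
structure IsExtensionBlock (u : Ultrafilter ℕ) (𝒞 : Set (Set ℕ)) (T F : Finset (ℕ → ℕ)) (N a : ℕ)
    (H : Finset ℕ) : Prop where
  nonempty : H.Nonempty
  lt : ∀ t ∈ H, N < t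
  start_mem : ∀ C ∈ 𝒞, ∀ f ∈ F, ∀ P ∈ T, a + P (∑ t ∈ H, f t) ∈ starSet u C
  extend_mem : ∀ C ∈ 𝒞, ∀ f ∈ F, ∀ P ∈ T, ∀ x ≤ N, ∀ y ≤ N, x + P y ∈ starSet u C →
    x + a + P (y + ∑ t ∈ H, f t) ∈ starSet u C

lemma exists_isExtensionBlock {u : Ultrafilter ℕ} (hu : IdempotentUF u)
    (hJ : ∀ B ∈ u, IsPolyJSet B) {𝒞 : Set (Set ℕ)} (hfin : 𝒞.Finite) (h𝒞 : ∀ C ∈ 𝒞, C ∈ u)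
    {T : Finset (ℕ → ℕ)} (hT : ∀ P ∈ T, IsPolyZeroConst P) (F : Finset (ℕ → ℕ)) (N : ℕ) :
    ∃ a H, IsExtensionBlock u 𝒞 T F N a H := by
  classical
  choose! Q hQ hPQ using fun P hP => (hT P hP).exists_add_eq
  let B : Set ℕ := {b | ∀ C ∈ 𝒞, b ∈ starSet u C ∧ ∀ P ∈ T, ∀ x ≤ N, ∀ y ≤ N,
    x + P y ∈ starSet u C → x + P y + b ∈ starSet u C}
  have hB : B ∈ u := by
    refine (Filter.eventually_all_finite hfin).2 fun C hC =>
      Filter.inter_mem (hu.starSet_mem (h𝒞 C hC)) ?_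
    exact (Filter.eventually_all_finset T).2 fun P _ =>
      (Filter.eventually_all_finite (Set.finite_Iic N)).2 fun x _ =>
      (Filter.eventually_all_finite (Set.finite_Iic N)).2 fun y _ =>
      Filter.eventually_imp_distrib_left.2 hu.setOf_add_mem_starSet_mem
  have hT' : ∀ R ∈ T ∪ (T ×ˢ range (N + 1)).image (fun q => Q q.1 q.2), IsPolyZeroConst R := by
    simp only [mem_union, mem_image, mem_product, Prod.exists]
    rintro R (hR | ⟨P, y, ⟨hP, -⟩, rfl⟩)
    exacts [hT R hR, hQ P hP y]
  obtain ⟨a, H, hH, hHN, haB⟩ := (hJ B hB).exists_gt F hT' N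
  refine ⟨a, H, hH, hHN, fun C hC f hf P hP => ?_, fun C hC f hf P hP x hx y hy hxy => ?_⟩
  · exact (haB f hf P (mem_union_left _ hP) C hC).1
  · have hQT : Q P y ∈ (T ×ˢ range (N + 1)).image (fun q => Q q.1 q.2) :=
      mem_image.2 ⟨(P, y), mem_product.2 ⟨hP, mem_range_succ_iff.2 hy⟩, rfl⟩
    convert (haB f hf (Q P y) (mem_union_right _ hQT) C hC).2 P hP x hx y hy hxy using 1
    rw [hPQ P hP]
    ring

/-- A quantity bounding the number `a`, the elements of `H` and the sums over `H` of the functions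
in `F`. -/
def blockSize (F : Finset (ℕ → ℕ)) (a : ℕ) (H : Finset ℕ) : ℕ :=
  a + H.sup id + ∑ f ∈ F, ∑ t ∈ H, f t

open scoped Classical in
/-- A choice of an extension block for every finite set `F` of functions, at a threshold `N F`
dominating the blocks of all proper subsets of `F`. The conditions to be met may depend on the
threshold. -/
structure IsBlockSystem (u : Ultrafilter ℕ) (𝒞 : ℕ → Set (Set ℕ)) (T : Finset (ℕ → ℕ))
    (N α : Finset (ℕ → ℕ) → ℕ) (H : Finset (ℕ → ℕ) → Finset ℕ) : Prop where
  isBlock : ∀ F, IsExtensionBlock u (𝒞 (N F)) T F (N F) (α F) (H F)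
  sum_blockSize_le : ∀ F, ∑ E ∈ F.ssubsets, blockSize E (α E) (H E) ≤ N F

lemma exists_eq_sum_ssubsets {ι : Type*} [DecidableEq ι] (c : Finset ι → ℕ → ℕ) :
    ∃ N : Finset ι → ℕ, ∀ F, N F = ∑ E ∈ F.ssubsets, c E (N E) := by
  refine ⟨Finset.strongInduction fun F ih =>
    ∑ E ∈ F.ssubsets.attach, c E.1 (ih E.1 (mem_ssubsets.1 E.2)), fun F => ?_⟩
  rw [Finset.strongInduction_eq, sum_attach F.ssubsets (fun E => c E _)]

lemma exists_isBlockSystem {𝒰 : Finset (Ultrafilter ℕ)} (hidem : ∀ u ∈ 𝒰, IdempotentUF u)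
    (hJ : ∀ u ∈ 𝒰, ∀ B ∈ u, IsPolyJSet B) {𝒞 : Ultrafilter ℕ → ℕ → Set (Set ℕ)}
    (hfin : ∀ u ∈ 𝒰, ∀ n, (𝒞 u n).Finite) (h𝒞 : ∀ u ∈ 𝒰, ∀ n, ∀ C ∈ 𝒞 u n, C ∈ u)
    {T : Finset (ℕ → ℕ)} (hT : ∀ P ∈ T, IsPolyZeroConst P) :
    ∃ (N : Finset (ℕ → ℕ) → ℕ) (α : Ultrafilter ℕ → Finset (ℕ → ℕ) → ℕ)
      (H : Ultrafilter ℕ → Finset (ℕ → ℕ) → Finset ℕ),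
      ∀ u ∈ 𝒰, IsBlockSystem u (𝒞 u) T N (α u) (H u) := by
  classical
  choose! a H hblock using fun u hu F n =>
    exists_isExtensionBlock (hidem u hu) (hJ u hu) (hfin u hu n) (h𝒞 u hu n) hT F n
  obtain ⟨N, hN⟩ := exists_eq_sum_ssubsets fun E n => ∑ u ∈ 𝒰, blockSize E (a u E n) (H u E n)
  refine ⟨N, fun u F => a u F (N F), fun u F => H u F (N F), fun u hu =>
    ⟨fun F => hblock u hu F (N F), fun F => (hN F).ge.trans' (sum_le_sum fun E _ => ?_)⟩⟩
  exact single_le_sum (f := fun u => blockSize E (a u E (N E)) (H u E (N E)))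
    (fun _ _ => Nat.zero_le _) hu

/-- A bound for `x + P y` over `x, y ≤ n` and monotone `P ∈ T`. -/
def valueBound (T : Finset (ℕ → ℕ)) (n : ℕ) : ℕ := n + ∑ P ∈ T, P n

namespace IsBlockSystem

variable {u : Ultrafilter ℕ} {𝒞 : ℕ → Set (Set ℕ)} {T : Finset (ℕ → ℕ)}
  {N α : Finset (ℕ → ℕ) → ℕ} {H : Finset (ℕ → ℕ) → Finset ℕ}
  {G : ℕ → Finset (ℕ → ℕ)} {f : ℕ → ℕ → ℕ} {P : ℕ → ℕ} {b : Finset ℕ} {n : ℕ}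

lemma lt_of_ssubset (hS : IsBlockSystem u 𝒞 T N α H) {F K : Finset (ℕ → ℕ)} (hFK : F ⊂ K)
    {s t : ℕ} (hs : s ∈ H F) (ht : t ∈ H K) : s < t := by
  classical
  refine lt_of_le_of_lt ?_ ((hS.isBlock K).lt t ht)
  calc s ≤ (H F).sup id := le_sup (f := id) hs
    _ ≤ blockSize F (α F) (H F) := by rw [blockSize]; omega
    _ ≤ ∑ E ∈ K.ssubsets, blockSize E (α E) (H E) :=
      single_le_sum (f := fun E => blockSize E (α E) (H E)) (fun _ _ => Nat.zero_le _)
        (mem_ssubsets.2 hFK)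
    _ ≤ N K := hS.sum_blockSize_le K

lemma sum_le (hS : IsBlockSystem u 𝒞 T N α H) (hG : StrictMono G) (hb : ∀ i ∈ b, i < n)
    {c : ℕ → ℕ} (hc : ∀ i, c i ≤ blockSize (G i) (α (G i)) (H (G i))) :
    ∑ i ∈ b, c i ≤ N (G n) := by
  classical
  calc ∑ i ∈ b, c i ≤ ∑ i ∈ b, blockSize (G i) (α (G i)) (H (G i)) := sum_le_sum fun i _ => hc i
    _ = ∑ E ∈ b.image G, blockSize E (α E) (H E) :=
      (sum_image (f := fun E => blockSize E (α E) (H E)) hG.injective.injOn).symm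
    _ ≤ ∑ E ∈ (G n).ssubsets, blockSize E (α E) (H E) :=
      sum_le_sum_of_subset <| image_subset_iff.2 fun i hi => mem_ssubsets.2 (hG (hb i hi))
    _ ≤ N (G n) := hS.sum_blockSize_le (G n)

lemma sum_alpha_le (hS : IsBlockSystem u 𝒞 T N α H) (hG : StrictMono G) (hb : ∀ i ∈ b, i < n) :
    ∑ i ∈ b, α (G i) ≤ N (G n) :=
  hS.sum_le hG hb fun i => by rw [blockSize]; omega

lemma sum_sum_le (hS : IsBlockSystem u 𝒞 T N α H) (hG : StrictMono G) (hf : ∀ i, f i ∈ G i)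
    (hb : ∀ i ∈ b, i < n) : ∑ i ∈ b, ∑ t ∈ H (G i), f i t ≤ N (G n) :=
  hS.sum_le hG hb fun i => (Nat.le_add_left _ _).trans' <|
    single_le_sum (f := fun g : ℕ → ℕ => ∑ t ∈ H (G i), g t) (fun _ _ => Nat.zero_le _) (hf i)

lemma value_le (hS : IsBlockSystem u 𝒞 T N α H) (hG : StrictMono G) (hf : ∀ i, f i ∈ G i)
    (hP : P ∈ T) (hPmono : Monotone P) (hb : ∀ i ∈ b, i < n) :
    ∑ i ∈ b, α (G i) + P (∑ i ∈ b, ∑ t ∈ H (G i), f i t) ≤ valueBound T (N (G n)) :=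
  add_le_add (hS.sum_alpha_le hG hb) <| (hPmono (hS.sum_sum_le hG hf hb)).trans <|
    single_le_sum (f := fun P => P (N (G n))) (fun _ _ => Nat.zero_le _) hP

lemma value_mem_starSet (hS : IsBlockSystem u 𝒞 T N α H) (hG : StrictMono G)
    (hf : ∀ i, f i ∈ G i) (hP : P ∈ T) {C : Set ℕ} (hb : b.Nonempty)
    (hC : ∀ i ∈ b, C ∈ 𝒞 (N (G i))) :
    ∑ i ∈ b, α (G i) + P (∑ i ∈ b, ∑ t ∈ H (G i), f i t) ∈ starSet u C := by
  induction b using Finset.induction_on_max with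
  | empty => exact absurd hb not_nonempty_empty
  | insert n b hbn ih =>
    have hn : n ∉ b := fun h => (hbn n h).false
    have hCn := hC n (mem_insert_self n b)
    rcases b.eq_empty_or_nonempty with rfl | hb
    · simpa using (hS.isBlock (G n)).start_mem C hCn (f n) (hf n) P hP
    · rw [sum_insert hn, sum_insert hn, add_comm (α (G n)), add_comm (∑ t ∈ H (G n), f n t)]
      exact (hS.isBlock (G n)).extend_mem C hCn (f n) (hf n) P hP _ (hS.sum_alpha_le hG hbn) _
        (hS.sum_sum_le hG hf hbn) (ih hb fun i hi => hC i (mem_insert_of_mem hi))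

end IsBlockSystem

lemma goodWitness_of_isBlockSystem {m : ℕ} {h : (Fin m → ℕ) → ℕ} {p : Fin m → Ultrafilter ℕ}
    {A : Set ℕ} {T : Finset (ℕ → ℕ)} {C : (l : Fin m) → (Fin l → ℕ) → Set ℕ}
    {𝒞 : Fin m → ℕ → Set (Set ℕ)} {N : Finset (ℕ → ℕ) → ℕ} {α : Fin m → Finset (ℕ → ℕ) → ℕ}
    {H : Fin m → Finset (ℕ → ℕ) → Finset ℕ} (hT : ∀ P ∈ T, Monotone P)
    (hA : ∀ v : Fin m → ℕ, (∀ l, v l ∈ C l fun i => v (i.castLE l.is_le')) → h v ∈ A)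
    (h𝒞 : ∀ l n w, (∀ i, w i ≤ valueBound T n) → C l w ∈ 𝒞 l n)
    (hS : ∀ l, IsBlockSystem (p l) (𝒞 l) T N (α l) (H l)) : GoodWitness m h A T α H := by
  refine ⟨fun j F _ => ((hS j).isBlock F).nonempty,
    fun j F K _ hFK s hs t ht => (hS j).lt_of_ssubset hFK hs ht, ?_⟩
  intro G _ hG f hf β hβ hβlt P hP
  have hGmono : StrictMono G := fun _ _ => hG _ _
  refine hA _ fun l => ((hS l).value_mem_starSet hGmono hf (hP l) (hβ l) fun n hn => ?_).1
  exact h𝒞 l _ _ fun i => (hS _).value_le hGmono hf (hP _) (hT _ (hP _))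
    fun k hk => hβlt _ l i.is_lt k hk n hn

end Blocks

theorem polynomial_image_stronger_polynomial_CST_general (m : ℕ) (h : (Fin m → ℕ) → ℕ)
    (p : Fin m → Ultrafilter ℕ) (hp : ∀ i, IdempotentUF (p i))
    (hJ : ∀ i, ∀ B ∈ p i, IsPolyJSet B) (A : Set ℕ) (hA : A ∈ (tensor m p).map h)
    (T : Finset (ℕ → ℕ)) (hT : ∀ P ∈ T, IsPolyZeroConst P) :
    ∃ (α : Fin m → Finset (ℕ → ℕ) → ℕ) (H : Fin m → Finset (ℕ → ℕ) → Finset ℕ),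
      (∀ i j, p i = p j → α i = α j ∧ H i = H j) ∧ GoodWitness m h A T α H := by
  classical
  obtain ⟨C, hCp, hCA⟩ := exists_sections_of_mem_tensor (Ultrafilter.mem_map.1 hA)
  let 𝒞 (u : Ultrafilter ℕ) (n : ℕ) : Set (Set ℕ) :=
    ⋃ l ∈ {l | p l = u}, C l '' Set.Iic fun _ => valueBound T n
  have hfin : ∀ u n, (𝒞 u n).Finite := fun u n =>
    (Set.toFinite _).biUnion fun l _ => (Set.finite_Iic _).image _
  have h𝒞 : ∀ u n, ∀ B ∈ 𝒞 u n, B ∈ u := by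
    intro u n B hB
    obtain ⟨l, rfl, w, -, rfl⟩ := Set.mem_iUnion₂.1 hB
    exact hCp l w
  obtain ⟨N, α, H, hS⟩ := exists_isBlockSystem (𝒰 := univ.image p) (by simpa using hp)
    (by simpa using hJ) (fun u _ => hfin u) (fun u _ => h𝒞 u) hT
  refine ⟨fun l => α (p l), fun l => H (p l), fun i j hij => by simp [hij], ?_⟩
  have hmem : ∀ l n w, (∀ i, w i ≤ valueBound T n) → C l w ∈ 𝒞 (p l) n := fun l n w hw =>
    Set.mem_biUnion (Set.mem_ofPred_eq.mpr rfl) ⟨w, hw, rfl⟩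
  exact goodWitness_of_isBlockSystem (fun P hP => (hT P hP).monotone) hCA hmem
    fun l => hS (p l) (mem_image_of_mem p (mem_univ l))

/-- Multidimensional stronger polynomial central sets theorem composed with a polynomial
`h : ℕ^m → ℕ` with no constant term; moreover when all the minimal idempotents coincide, the
witnessing functions may be chosen to coincide. -/
theorem polynomial_image_stronger_polynomial_CST (m : ℕ) (hm : 1 ≤ m)
    (h : (Fin m → ℕ) → ℕ)
    (hh : ∃ Q : MvPolynomial (Fin m) ℕ,
      MvPolynomial.coeff 0 Q = 0 ∧ ∀ v, h v = MvPolynomial.eval v Q)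
    (p : Fin m → Ultrafilter ℕ) (hp : ∀ i, IsMinimalIdempotent (p i))
    (A : Set ℕ) (hA : A ∈ (tensor m p).map h)
    (T : Finset (ℕ → ℕ)) (hT : T.Nonempty) (hTP : ∀ P ∈ T, IsPolyZeroConst P) :
    (∃ (α : Fin m → Finset (ℕ → ℕ) → ℕ) (H : Fin m → Finset (ℕ → ℕ) → Finset ℕ),
      GoodWitness m h A T α H) ∧
    ((∀ i j : Fin m, p i = p j) →
      ∃ (α : Fin m → Finset (ℕ → ℕ) → ℕ) (H : Fin m → Finset (ℕ → ℕ) → Finset ℕ),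
        (∀ i j : Fin m, α i = α j) ∧ (∀ i j : Fin m, H i = H j) ∧
        GoodWitness m h A T α H) := by
  obtain ⟨α, H, heq, hw⟩ := polynomial_image_stronger_polynomial_CST_general m h p
    (fun i => (hp i).1) (fun i B hB => (hp i).isPolyJSet hB) A hA T hTP
  exact ⟨⟨α, H, hw⟩, fun hpp =>
    ⟨α, H, fun i j => (heq i j (hpp i j)).1, fun i j => (heq i j (hpp i j)).2, hw⟩⟩

end MultiCST
end
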